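/- Let F₀ be a field of characteristic 0 that is finitely generated over ℚ. There is a finite subset 𝒮 of ℕ × ℕ, depending only on F₀, such that for every integer n of the form n = 3^{k₁} + 3^{k₂} + 3^{k₃} with integers k₁ > k₂ > k₃ ≥ 0 and (k₁ − k₃, k₂ − k₃) ∉ 𝒮, the general field extension Eₙ/Fₙ of degree n over F₀ contains no nonzero element δ ∈ Eₙ with Tr_{Eₙ/Fₙ}(δ) = 0 and Tr_{Eₙ/Fₙ}(δ³) = 0. -/

import Mathlib

noncomputable section

namespace GenExtBase

variable (F₀ : Type) [Field F₀]

/-- `Lₙ = F₀(x₁, …, xₙ)`, the field of rational functions in `n` variables over `F₀`. -/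
def L (n : ℕ) : Type := FractionRing (MvPolynomial (Fin n) F₀)

noncomputable instance (n : ℕ) : Field (L F₀ n) :=
  inferInstanceAs (Field (FractionRing (MvPolynomial (Fin n) F₀)))

noncomputable instance (n : ℕ) : Algebra (MvPolynomial (Fin n) F₀) (L F₀ n) :=
  inferInstanceAs (Algebra (MvPolynomial (Fin n) F₀) (FractionRing (MvPolynomial (Fin n) F₀)))

instance (n : ℕ) : IsFractionRing (MvPolynomial (Fin n) F₀) (L F₀ n) :=
  inferInstanceAs
    (IsFractionRing (MvPolynomial (Fin n) F₀) (FractionRing (MvPolynomial (Fin n) F₀)))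

/-- The automorphism of `Lₙ` induced by a permutation `σ ∈ Sₙ` of the variables
`x₁, …, xₙ`. -/
noncomputable def permAut (n : ℕ) (σ : Equiv.Perm (Fin n)) : L F₀ n ≃+* L F₀ n :=
  IsFractionRing.ringEquivOfRingEquiv (MvPolynomial.renameEquiv F₀ σ).toRingEquiv

/-- The subfield of `Lₙ` consisting of elements fixed by all permutations in `S`. -/
noncomputable def fixedSubfield (n : ℕ) (S : Set (Equiv.Perm (Fin n))) :
    Subfield (L F₀ n) where
  carrier := {a | ∀ σ ∈ S, permAut F₀ n σ a = a}
  mul_mem' := fun ha hb σ hσ => by rw [map_mul, ha σ hσ, hb σ hσ]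
  one_mem' := fun σ _ => map_one _
  add_mem' := fun ha hb σ hσ => by rw [map_add, ha σ hσ, hb σ hσ]
  zero_mem' := fun σ _ => map_zero _
  neg_mem' := fun ha σ hσ => by rw [map_neg, ha σ hσ]
  inv_mem' := fun a ha σ hσ => by rw [map_inv₀, ha σ hσ]

/-- `Fₙ = Lₙ^{Sₙ}`, the fixed field of the full symmetric group. -/
noncomputable def F (n : ℕ) : Subfield (L F₀ n) := fixedSubfield F₀ n Set.univ

/-- `Eₙ = Lₙ^{Sₙ₋₁}`, the fixed field of the subgroup of permutations fixing `x₁`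
(i.e. permuting only `x₂, …, xₙ`). -/
noncomputable def E (n : ℕ) : Subfield (L F₀ n) :=
  fixedSubfield F₀ n {σ | ∀ i : Fin n, (i : ℕ) = 0 → σ i = i}

theorem F_le_E (n : ℕ) : F F₀ n ≤ E F₀ n := fun _ ha σ _ => ha σ (Set.mem_univ σ)

/-- `Eₙ` is an `Fₙ`-algebra via the inclusion `Fₙ ⊆ Eₙ`. -/
noncomputable instance (n : ℕ) : Algebra (F F₀ n) (E F₀ n) :=
  (Subfield.inclusion (F_le_E F₀ n)).toAlgebra

end GenExtBase

section
open Finset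
namespace PadeX
noncomputable def gbin (μ : ℝ) (j : ℕ) : ℝ := (∏ i ∈ range j, (μ - i)) / (j.factorial : ℝ)

lemma gbin_succ (μ : ℝ) (j : ℕ) : gbin μ (j+1) * ((j:ℝ)+1) = μ * gbin (μ - 1) j := by
  unfold gbin
  rw [prod_range_succ', Nat.factorial_succ]
  have h1 : (j.factorial : ℝ) ≠ 0 := by positivity
  have h2 : (j:ℝ) + 1 ≠ 0 := by positivity
  have : ∏ k ∈ range j, (μ - ((k+1 : ℕ):ℝ)) = ∏ k ∈ range j, (μ - 1 - (k:ℝ)) := by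
    apply prod_congr rfl; intro k _; push_cast; ring
  rw [this]; push_cast; field_simp; ring

lemma hasDeriv_T (μ : ℝ) (n : ℕ) (w : ℝ) (hw : 0 ≤ w) :
    HasDerivAt (fun w : ℝ => (1+w)^μ - ∑ j ∈ range (n+1), gbin μ j * w^j)
      (μ * ((1+w)^(μ-1) - ∑ j ∈ range n, gbin (μ-1) j * w^j)) w := by
  have h1 : HasDerivAt (fun w : ℝ => (1+w)^μ) (μ * (1+w)^(μ-1)) w := by
    have := (((hasDerivAt_id w).const_add 1).rpow_const (p := μ) (Or.inl (by simp; positivity)))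
    simpa using this
  have h2 : HasDerivAt (fun w : ℝ => ∑ j ∈ range (n+1), gbin μ j * w^j)
      (μ * ∑ j ∈ range n, gbin (μ-1) j * w^j) w := by
    have : (fun w : ℝ => ∑ j ∈ range (n+1), gbin μ j * w^j) = fun w : ℝ => ∑ j ∈ range n, gbin μ (j+1) * w^(j+1) + gbin μ 0 := by
      funext w; rw [sum_range_succ']; simp
    rw [this, mul_sum]
    apply HasDerivAt.add_const
    apply HasDerivAt.fun_sum
    intro j _
    have := (hasDerivAt_pow (j+1) w).const_mul (gbin μ (j+1))
    refine this.congr_deriv ?_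
    have h3 := gbin_succ μ j
    push_cast; linear_combination w^j * h3
  rw [mul_sub]; exact h1.sub h2

lemma taylorLower {ι : Type*} (s : Finset ι) (e : ℕ) (lo : ℝ) : ∀ (n : ℕ) (q μ : ι → ℝ),
    (∀ w : ℝ, 0 ≤ w → w ≤ 1 → lo * w^e ≤ ∑ i ∈ s, q i * (∏ j ∈ range n, (μ i - j)) * (1+w)^(μ i - n)) →
    ∀ w : ℝ, 0 ≤ w → w ≤ 1 → lo * (e.factorial / (e+n).factorial) * w^(e+n) ≤
      ∑ i ∈ s, q i * ((1+w)^(μ i) - ∑ j ∈ range n, gbin (μ i) j * w^j) := by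
  intro n
  induction n with
  | zero =>
    intro q μ h w h0 h1
    have := h w h0 h1
    have h2 : (e.factorial : ℝ) ≠ 0 := by positivity
    simpa [div_self h2] using this
  | succ n ih =>
    intro q μ h w h0 h1
    have IH := ih (fun i => q i * μ i) (fun i => μ i - 1) (by
      intro w h0 h1
      convert h w h0 h1 using 2 with i _
      rw [prod_range_succ']
      have : ∏ k ∈ range n, (μ i - ((k+1 : ℕ):ℝ)) = ∏ k ∈ range n, (μ i - 1 - (k:ℝ)) := by
        apply prod_congr rfl; intro k _; push_cast; ring
      rw [this]
      have h3 : μ i - 1 - n = μ i - ((n+1 : ℕ) : ℝ) := by push_cast; ring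
      rw [h3]; push_cast; ring)
    set g : ℝ → ℝ := fun w => ∑ i ∈ s, q i * ((1+w)^(μ i) - ∑ j ∈ range (n+1), gbin (μ i) j * w^j) - lo * (e.factorial / (e+(n+1)).factorial) * w^(e+(n+1)) with hg
    set g' : ℝ → ℝ := fun w => ∑ i ∈ s, q i * μ i * ((1+w)^(μ i-1) - ∑ j ∈ range n, gbin (μ i-1) j * w^j) - lo * (e.factorial / (e+n).factorial) * w^(e+n) with hg'
    have hd : ∀ w, 0 ≤ w → HasDerivAt g (g' w) w := by
      intro w hw
      rw [hg, hg']
      apply HasDerivAt.sub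
      · apply HasDerivAt.fun_sum
        intro i _
        rw [mul_assoc]
        exact (hasDeriv_T (μ i) n w hw).const_mul (q i)
      · have := (hasDerivAt_pow (e+(n+1)) w).const_mul (lo * (e.factorial / (e+(n+1)).factorial))
        refine this.congr_deriv ?_
        have : e + (n+1) = e + n + 1 := by ring
        rw [this, Nat.factorial_succ]
        have h2 : ((e+n).factorial : ℝ) ≠ 0 := by positivity
        have h3 : ((e:ℝ)+n+1) ≠ 0 := by positivity
        simp only [Nat.add_sub_cancel]
        push_cast
        field_simp
    have hmono : MonotoneOn g (Set.Icc 0 1) := by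
      apply monotoneOn_of_deriv_nonneg (convex_Icc 0 1)
      · intro x hx; exact (hd x hx.1).continuousAt.continuousWithinAt
      · intro x hx; rw [interior_Icc] at hx
        exact (hd x hx.1.le).differentiableAt.differentiableWithinAt
      · intro x hx; rw [interior_Icc] at hx
        rw [(hd x hx.1.le).deriv]
        have := IH x hx.1.le hx.2.le
        simp only [hg']; linarith
    have h00 : g 0 = 0 := by
      simp only [hg]
      have : ∀ i ∈ s, q i * ((1+(0:ℝ))^(μ i) - ∑ j ∈ range (n+1), gbin (μ i) j * (0:ℝ)^j) = 0 := by
        intro i _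
        rw [sum_range_succ']; simp [gbin]
      rw [sum_congr rfl this]; simp
    have := hmono (a := 0) (b := w) (by simp) ⟨h0, h1⟩ h0
    rw [h00] at this
    simp only [hg] at this; linarith

lemma fact_dvd (b : ℕ) [hb : Fact b.Prime] (r : ℤ) (j : ℕ) :
    ((j.factorial : ℕ) : ℤ) ∣ (b:ℤ)^j * ∏ i ∈ range j, (r + b*i) := by
  have hj : j.factorial ≠ 0 := Nat.factorial_ne_zero j
  obtain ⟨t, ht⟩ := pow_padicValNat_dvd (p := b) (n := j.factorial)
  set v := padicValNat b j.factorial with hv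
  have hvj : v ≤ j := by
    have h1 := sub_one_mul_padicValNat_factorial (p := b) j
    have h2 := hb.out.two_le
    have : (b-1) * v ≤ j := by rw [hv, h1]; exact Nat.sub_le _ _
    calc v = 1 * v := by ring
      _ ≤ (b-1)*v := Nat.mul_le_mul_right _ (by omega)
      _ ≤ j := this
  have hcop : Nat.Coprime b t := by
    rw [hb.out.coprime_iff_not_dvd]
    rintro ⟨u, rfl⟩
    have : b^(v+1) ∣ j.factorial := ⟨u, by rw [ht]; ring⟩
    exact pow_succ_padicValNat_not_dvd hj this
  rw [ht]; push_cast
  apply mul_dvd_mul (pow_dvd_pow _ hvj)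
  have hc : IsCoprime (b:ℤ) (t:ℤ) := Nat.isCoprime_iff_coprime.mpr hcop
  obtain ⟨u, s, hus⟩ := hc
  -- b*u ≡ 1 mod t
  have h3 : (t:ℤ) ∣ ∏ i ∈ range j, (r*u + i) := by
    have h4 : (j.factorial : ℤ) ∣ ∏ i ∈ range j, (r*u + i) := by
      exact Nat.factorial_coe_dvd_prod j (r*u)
    exact dvd_trans ⟨(b^v:ℕ), by rw [ht]; push_cast; ring⟩ h4
  have h5 : (∏ i ∈ range j, (r + b*i)) ≡ (∏ i ∈ range j, (b * (r*u + i))) [ZMOD t] := by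
    apply Int.ModEq.prod
    intro i _
    apply Int.ModEq.symm
    rw [Int.modEq_iff_dvd]
    exact ⟨r * s, by linear_combination -r * hus⟩
  rw [Int.ModEq.dvd_iff h5, prod_mul_distrib]
  exact Dvd.dvd.mul_left h3 _
end PadeX

namespace PadeX
lemma fact_int (b : ℕ) [hb : Fact b.Prime] (r : ℤ) (j : ℕ) :
    ∃ z : ℤ, (b:ℝ)^(2*j) * ((∏ i ∈ range j, ((r:ℝ)/b + i)) / (j.factorial : ℝ)) = z := by
  obtain ⟨z, hz⟩ := fact_dvd b r j
  refine ⟨z, ?_⟩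
  have hb0 : (b:ℝ) ≠ 0 := by exact_mod_cast hb.out.ne_zero
  have hj : (j.factorial : ℝ) ≠ 0 := by positivity
  have h1 : (b:ℝ)^j * ∏ i ∈ range j, ((r:ℝ)/b + i) = ∏ i ∈ range j, ((r:ℝ) + b * i) := by
    rw [← card_range j, ← prod_const, card_range, ← prod_mul_distrib]
    apply prod_congr rfl; intro i _; field_simp
  have h2 : (b:ℝ)^j * ∏ i ∈ range j, ((r:ℝ) + b * i) = j.factorial * z := by exact_mod_cast hz
  rw [two_mul, pow_add, ← mul_div_assoc, mul_assoc, h1, h2]; field_simp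

lemma prod_split (ν : ℝ) (n1 n2 k : ℕ) (hk : k ≤ n2) :
    (∏ j ∈ range k, (ν - n1 + j)) * (∏ i ∈ range (n1+1), (ν + k - i)) *
      (∏ j ∈ range (n2-k), (ν + k + 1 + j)) = ∏ j ∈ range (n1+n2+1), (ν - n1 + j) := by
  have : n1+n2+1 = k + (n1+1) + (n2-k) := by omega
  rw [this, prod_range_add (fun j : ℕ => ν - n1 + j) (k + (n1+1)), prod_range_add (fun j : ℕ => ν - n1 + j) k]
  congr 1
  · congr 1
    rw [← prod_range_reflect]
    apply prod_congr rfl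
    intro i hi
    have : i ≤ n1 := by simpa [Nat.lt_succ_iff] using hi
    rw [Nat.add_sub_cancel, Nat.cast_sub this]; push_cast; ring
  · apply prod_congr rfl
    intro i _; push_cast; ring

lemma abs_prod_div (j : ℕ) (x : ℝ) (M : ℕ) (h : ∀ i ∈ range j, |x + i| ≤ M) :
    |(∏ i ∈ range j, (x + i)) / (j.factorial : ℝ)| ≤ 3^M := by
  rw [abs_div, abs_prod, abs_of_nonneg (by positivity : (0:ℝ) ≤ j.factorial)]
  have h1 : ∏ i ∈ range j, |x+i| ≤ (M:ℝ)^j := by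
    calc _ ≤ ∏ i ∈ range j, (M:ℝ) := prod_le_prod (fun i _ => abs_nonneg _) h
      _ = _ := by simp
  calc _ ≤ (M:ℝ)^j / j.factorial := by gcongr
    _ ≤ Real.exp M := Real.pow_div_factorial_le_exp _ (by positivity) _
    _ = (Real.exp 1)^M := by rw [← Real.exp_nat_mul]; simp
    _ ≤ _ := by
      gcongr
      exact (Real.exp_one_lt_d9.trans (by norm_num)).le

set_option maxHeartbeats 1000000 in
theorem pade (b : ℕ) [hb : Fact b.Prime] (hb3 : b ≤ 3) (n1 n2 : ℕ) :
    ∃ q p : ℕ → ℤ, ∀ w : ℝ, 0 ≤ w → w ≤ 1 →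
      |∑ k ∈ range (n2+1), (q k : ℝ) * (1+w)^k| ≤ 400^(n1+n2+1) ∧
      w^(n1+n2+1) ≤ 400^(n1+n2+1) * |(∑ k ∈ range (n2+1), (q k : ℝ) * (1+w)^k) * (1+w)^((1:ℝ)/b) -
        ∑ j ∈ range (n1+1), (p j : ℝ) * w^j| ∧
      |(∑ k ∈ range (n2+1), (q k : ℝ) * (1+w)^k) * (1+w)^((1:ℝ)/b) -
        ∑ j ∈ range (n1+1), (p j : ℝ) * w^j| ≤ 400^(n1+n2+1) * w^(n1+n2+1) := by
  have hb0 : (0:ℝ) < b := by exact_mod_cast hb.out.pos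
  have hb1 : (1:ℝ) ≤ b := by exact_mod_cast hb.out.one_lt.le
  have hb3' : (b:ℝ) ≤ 3 := by exact_mod_cast hb3
  have hb9 : (b:ℝ)^2 ≤ 9 := by nlinarith
  set ν : ℝ := 1/b with hν
  have hν0 : 0 < ν := by positivity
  have hν1 : ν ≤ 1 := by rw [hν, div_le_one hb0]; exact hb1
  set Pr : ℝ := ∏ j ∈ range (n1+n2+1), (ν - n1 + j) with hPr
  set A : ℕ → ℝ := fun k => (∏ j ∈ range (n2-k), (ν + k + 1 + j)) / ((n2-k).factorial : ℝ) with hA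
  set B : ℕ → ℝ := fun k => (∏ j ∈ range k, (ν - n1 + j)) / (k.factorial : ℝ) with hB
  -- integrality
  have hAi : ∀ k, ∃ z : ℤ, (b:ℝ)^(2*(n2-k)) * A k = z := by
    intro k
    obtain ⟨z, hz⟩ := fact_int b (1 + b*(k+1)) (n2-k)
    refine ⟨z, ?_⟩
    rw [← hz]; simp only [hA]
    congr 3; funext j; congr 1; rw [hν]; push_cast; field_simp; ring
  have hBi : ∀ k, ∃ z : ℤ, (b:ℝ)^(2*k) * B k = z := by
    intro k
    obtain ⟨z, hz⟩ := fact_int b (1 - b*n1) k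
    refine ⟨z, ?_⟩
    rw [← hz]; simp only [hB]
    congr 3; funext j; congr 1; rw [hν]; push_cast; field_simp
  have hGi : ∀ k j : ℕ, ∃ z : ℤ, (b:ℝ)^(2*j) * gbin (ν + k) j = z := by
    intro k j
    obtain ⟨z, hz⟩ := fact_int b (1 + b*k - b*(j-1)) j
    refine ⟨z, ?_⟩
    rw [← hz, gbin, ← prod_range_reflect]
    congr 2
    apply prod_congr rfl
    intro i hi
    have hi' : i + 1 ≤ j := by simpa using hi
    rw [show j - 1 - i = j - (i+1) by omega, Nat.cast_sub hi', hν]; push_cast; field_simp; ring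
  have hPi : (1:ℝ) ≤ b^(2*(n1+n2+1)) * (|Pr| / ((n1+n2+1).factorial:ℝ)) := by
    obtain ⟨z, hz⟩ := fact_int b (1 - b*n1) (n1+n2+1)
    have h1 : (b:ℝ)^(2*(n1+n2+1)) * (Pr / ((n1+n2+1).factorial:ℝ)) = z := by
      rw [← hz, hPr]
      congr 3; funext j; congr 1; rw [hν]; push_cast; field_simp
    have h2 : Pr ≠ 0 := by
      rw [hPr, prod_ne_zero_iff]
      intro j _ h
      have h3 : (1:ℝ) = b * (n1 - j) := by
        have : ν = n1 - j := by linarith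
        rw [← this, hν]; field_simp
      have h4 : (1:ℤ) = b * (n1 - j) := by exact_mod_cast h3
      have h5 : (b:ℤ) ∣ 1 := ⟨_, h4⟩
      have h6 : b ∣ 1 := by exact_mod_cast h5
      exact hb.out.one_lt.ne' (Nat.dvd_one.mp h6)
    have h3 : z ≠ 0 := by
      intro h
      rw [h] at h1
      have : (b:ℝ)^(2*(n1+n2+1)) * (Pr / ((n1+n2+1).factorial:ℝ)) ≠ 0 := by positivity
      exact this (by simpa using h1)
    have h4 : (1:ℝ) ≤ |(z:ℝ)| := by exact_mod_cast Int.one_le_abs h3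
    rw [← h1, abs_mul, abs_div, abs_of_nonneg (by positivity : (0:ℝ) ≤ b^(2*(n1+n2+1))),
      abs_of_nonneg (by positivity : (0:ℝ) ≤ (n1+n2+1).factorial)] at h4
    exact h4
  obtain ⟨ε, hε, hεPr⟩ : ∃ ε : ℤ, |(ε:ℝ)| = 1 ∧ ε * Pr = |Pr| := by
    rcases abs_cases Pr with h | h
    · exact ⟨1, by simp, by simp [h.1]⟩
    · exact ⟨-1, by simp, by simp [h.1]⟩
  choose zA hzA using hAi
  choose zB hzB using hBi
  choose zG hzG using hGi
  set q0 : ℕ → ℝ := fun k => ε * (-1)^(n2-k) * A k * B k with hq0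
  set K : ℝ := (b:ℝ)^(2*n1+2*n2) with hK
  have hKpos : 1 ≤ K := one_le_pow₀ hb1
  have hqi : ∀ k ∈ range (n2+1), ((b^(2*n1) * (ε * (-1)^(n2-k) * zA k * zB k) : ℤ) : ℝ) = K * q0 k := by
    intro k hk
    have hk' : k ≤ n2 := by simpa [Nat.lt_succ_iff] using hk
    push_cast
    rw [← hzA, ← hzB, hq0, hK]
    have : 2*n1+2*n2 = 2*n1 + 2*(n2-k) + 2*k := by omega
    rw [this, pow_add, pow_add]; ring
  have hpi : ∀ j ∈ range (n1+1), ((∑ k ∈ range (n2+1), b^(2*(n1-j)) * (ε * (-1)^(n2-k) * zA k * zB k) * zG k j : ℤ) : ℝ) = K * ∑ k ∈ range (n2+1), q0 k * gbin (ν+k) j := by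
    intro j hj
    have hj' : j ≤ n1 := by simpa [Nat.lt_succ_iff] using hj
    push_cast
    rw [mul_sum]
    apply sum_congr rfl
    intro k hk
    have hk' : k ≤ n2 := by simpa [Nat.lt_succ_iff] using hk
    rw [← hzA, ← hzB, ← hzG, hq0, hK]
    have : 2*n1+2*n2 = 2*(n1-j) + 2*(n2-k) + 2*k + 2 * j := by omega
    rw [this, pow_add, pow_add, pow_add]; ring
  refine ⟨fun k => b^(2*n1) * (ε * (-1)^(n2-k) * zA k * zB k),
    fun j => ∑ k ∈ range (n2+1), b^(2*(n1-j)) * (ε * (-1)^(n2-k) * zA k * zB k) * zG k j, ?_⟩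
  intro w hw0 hw1
  have hQ : ∑ k ∈ range (n2+1), ((b^(2*n1) * (ε * (-1)^(n2-k) * zA k * zB k) : ℤ) : ℝ) * (1+w)^k = K * ∑ k ∈ range (n2+1), q0 k * (1+w)^k := by
    rw [mul_sum]; apply sum_congr rfl; intro k hk; rw [hqi k hk]; ring
  have hR : (∑ k ∈ range (n2+1), ((b^(2*n1) * (ε * (-1)^(n2-k) * zA k * zB k) : ℤ) : ℝ) * (1+w)^k) * (1+w)^ν - ∑ j ∈ range (n1+1), ((∑ k ∈ range (n2+1), b^(2*(n1-j)) * (ε * (-1)^(n2-k) * zA k * zB k) * zG k j : ℤ) : ℝ) * w^j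
     = K * ∑ k ∈ range (n2+1), q0 k * ((1+w)^(ν+k) - ∑ j ∈ range (n1+1), gbin (ν+k) j * w^j) := by
    rw [hQ, sum_congr rfl (fun j hj => by rw [hpi j hj] : ∀ j ∈ range (n1+1), _ = (K * ∑ k ∈ range (n2+1), q0 k * gbin (ν+k) j) * w^j)]
    simp_rw [mul_sub, sum_sub_distrib, mul_sub, mul_assoc]
    congr 1
    · rw [sum_mul]; congr 1; apply sum_congr rfl; intro k _
      rw [Real.rpow_add (by positivity), Real.rpow_natCast]; ring
    · rw [← mul_sum]; congr 1
      simp_rw [sum_mul, mul_sum]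
      rw [sum_comm]
      apply sum_congr rfl; intro k _; apply sum_congr rfl; intro j _; ring
  rw [hR, hQ]
  set S : ℝ := |Pr| / n2.factorial with hS
  have hkey : ∀ w : ℝ, 0 ≤ w → ∑ k ∈ range (n2+1), q0 k * (∏ j ∈ range (n1+1), (ν + k - j)) * (1+w)^(ν + k - (n1+1 : ℕ)) = S * w^n2 * (1+w)^(ν - (n1+1:ℕ)) := by
    intro w hw
    have h1 : w^n2 = ∑ k ∈ range (n2+1), (1+w)^k * (-1)^(n2-k) * (n2.choose k) := by
      rw [← add_pow]; congr 1; ring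
    rw [h1, mul_sum, sum_mul]
    apply sum_congr rfl
    intro k hk
    have hk' : k ≤ n2 := by simpa [Nat.lt_succ_iff] using hk
    have h2 := prod_split ν n1 n2 k hk'
    have h3 : ν + k - (n1+1:ℕ) = (ν - (n1+1:ℕ)) + k := by ring
    rw [h3, Real.rpow_add (by positivity), Real.rpow_natCast, hS, ← hεPr, hPr, ← h2, hq0]
    rw [Nat.cast_choose ℝ hk', hA, hB]
    have h4 : (n2.factorial : ℝ) ≠ 0 := by positivity
    have h5 : (k.factorial : ℝ) ≠ 0 := by positivity
    have h6 : ((n2-k).factorial : ℝ) ≠ 0 := by positivity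
    field_simp
  have hSpos : 0 ≤ S := by positivity
  have hup : ∀ w : ℝ, 0 ≤ w → (1+w)^(ν - (n1+1:ℕ)) ≤ 1 := by
    intro w hw
    apply Real.rpow_le_one_of_one_le_of_nonpos (by linarith)
    push_cast; have : (0:ℝ) ≤ n1 := by positivity
    linarith
  have hlow : ∀ w : ℝ, 0 ≤ w → w ≤ 1 → ((2:ℝ)^(n1+1))⁻¹ ≤ (1+w)^(ν - (n1+1:ℕ)) := by
    intro w hw hw1
    rw [Real.rpow_sub (by positivity), Real.rpow_natCast, ← one_div]
    have h1 : (1:ℝ) ≤ (1+w)^ν := Real.one_le_rpow (by linarith) hν0.le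
    have h2 : (1+w)^(n1+1) ≤ 2^(n1+1) := by gcongr; linarith
    gcongr
  set R : ℝ := ∑ k ∈ range (n2+1), q0 k * ((1+w)^(ν+k) - ∑ j ∈ range (n1+1), gbin (ν+k) j * w^j) with hRdef
  have hL := taylorLower (range (n2+1)) n2 (S * ((2:ℝ)^(n1+1))⁻¹) (n1+1) q0 (fun k => ν + k) (by
    intro w h0 h1
    rw [hkey w h0]
    have := hlow w h0 h1
    calc _ = S * w^n2 * ((2:ℝ)^(n1+1))⁻¹ := by ring
      _ ≤ _ := by gcongr) w hw0 hw1
  have hU := taylorLower (range (n2+1)) n2 (-S) (n1+1) (fun k => - q0 k) (fun k => ν + k) (by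
    intro w h0 h1
    simp_rw [neg_mul, sum_neg_distrib]
    rw [hkey w h0]
    have := hup w h0
    rw [neg_le_neg_iff]
    calc S * w^n2 * (1+w)^(ν - (n1+1:ℕ)) ≤ S * w^n2 * 1 := by gcongr
      _ = _ := by ring) w hw0 hw1
  simp_rw [neg_mul, sum_neg_distrib] at hU
  rw [← hRdef] at hL hU
  have hSf : S * (n2.factorial / (n2+(n1+1)).factorial) = |Pr| / ((n1+n2+1).factorial:ℝ) := by
    rw [hS, show n2+(n1+1) = n1+n2+1 by ring]
    have h4 : (n2.factorial : ℝ) ≠ 0 := by positivity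
    field_simp
  have hexp : n2 + (n1+1) = n1+n2+1 := by ring
  set N := n1+n2+1 with hN
  set θ := |Pr| / (N.factorial:ℝ) with hθ
  have hL' : θ * ((2:ℝ)^(n1+1))⁻¹ * w^N ≤ R := by
    rw [← hSf, ← hexp]; refine le_trans (le_of_eq ?_) hL; ring
  have hU' : R ≤ θ * w^N := by
    rw [← hSf, ← hexp]; linarith
  have habs : ∀ j < N, |ν - n1 + j| ≤ N := by
    intro j hj
    have h1 : (j:ℝ) + 1 ≤ N := by exact_mod_cast hj
    have h2 : (n1:ℝ) + 1 ≤ N := by rw [hN]; push_cast; have : (0:ℝ) ≤ n2 := by positivity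
                                   linarith
    have h3 : (0:ℝ) ≤ j := by positivity
    have h4 : (0:ℝ) ≤ n1 := by positivity
    rw [abs_le]; constructor <;> linarith
  have hθup : θ ≤ 3^N := by
    have := abs_prod_div N (ν - n1) N (by intro i hi; exact habs i (by simpa using hi))
    rw [abs_div, abs_of_nonneg (by positivity : (0:ℝ) ≤ N.factorial)] at this
    exact this
  have hθ0 : 0 ≤ θ := by positivity
  have hR0 : 0 ≤ R := le_trans (by positivity) hL'
  have hK9 : K ≤ 9^N := by
    calc K ≤ 3^(2*n1+2*n2) := by rw [hK]; gcongr
      _ = 9^(n1+n2) := by rw [show (9:ℝ) = 3^2 by norm_num, ← pow_mul]; congr 1; ring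
      _ ≤ 9^N := pow_le_pow_right₀ (by norm_num) (by omega)
  have hn1N : n1+1 ≤ N := by omega
  clear_value R θ K
  rw [abs_mul, abs_mul, abs_of_nonneg hR0, abs_of_nonneg (by positivity : (0:ℝ) ≤ K)]
  refine ⟨?_, ?_, ?_⟩
  · have hqk : ∀ k ∈ range (n2+1), |q0 k * (1+w)^k| ≤ 3^N * 3^N * 2^N := by
      intro k hk
      have hk' : k ≤ n2 := by simpa [Nat.lt_succ_iff] using hk
      rw [hq0, abs_mul]
      simp only
      rw [abs_mul, abs_mul, abs_mul, hε, abs_pow, abs_neg, abs_one, one_pow, one_mul, one_mul]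
      have hA1 : |A k| ≤ 3^N := by
        have := abs_prod_div (n2-k) (ν + k + 1) N (by
          intro i hi
          have hi' : i < n2 - k := by simpa using hi
          have h1 : i + 1 + k + 1 ≤ N := by omega
          have h1' : (i:ℝ) + 1 + k + 1 ≤ N := by exact_mod_cast h1
          rw [abs_of_nonneg (by positivity)]; linarith)
        exact this
      have hB1 : |B k| ≤ 3^N := abs_prod_div k (ν - n1) N (by
          intro i hi
          have hi' : i < k := by simpa using hi
          exact habs i (by omega))
      have h2 : |(1+w)^k| ≤ 2^N := by
        rw [abs_of_nonneg (by positivity)]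
        calc (1+w)^k ≤ 2^k := by gcongr; linarith
          _ ≤ 2^N := pow_le_pow_right₀ (by norm_num) (by omega)
      gcongr
    have h3 : |∑ k ∈ range (n2+1), q0 k * (1+w)^k| ≤ (n2+1) * (3^N * 3^N * 2^N) := by
      calc _ ≤ ∑ k ∈ range (n2+1), |q0 k * (1+w)^k| := abs_sum_le_sum_abs _ _
        _ ≤ ∑ k ∈ range (n2+1), (3^N * 3^N * 2^N : ℝ) := sum_le_sum hqk
        _ = _ := by simp
    have h4 : (n2:ℝ) + 1 ≤ 2^N := by
      have : n2 + 1 ≤ 2^N := by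
        have := (Nat.lt_two_pow_self (n := N)); omega
      exact_mod_cast this
    calc _ ≤ (9:ℝ)^N * (2^N * (3^N * 3^N * 2^N)) := by gcongr; exact h3.trans (by gcongr)
      _ = 324^N := by simp only [← mul_pow]; norm_num
      _ ≤ _ := by gcongr; norm_num
  · have h1 : (1:ℝ) ≤ 9^N * θ := by
      refine hPi.trans ?_
      gcongr
      rw [pow_mul]; gcongr
    have h2 : (1:ℝ) ≤ 18^N * (θ * ((2:ℝ)^(n1+1))⁻¹) := by
      calc (1:ℝ) ≤ 9^N * θ := h1
        _ = (18^N * θ) * (2^N)⁻¹ := by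
          rw [show (18:ℝ) = 9 * 2 by norm_num, mul_pow]; field_simp
        _ ≤ (18^N * θ) * (2^(n1+1))⁻¹ := by
          gcongr; norm_num
        _ = _ := by ring
    calc w^N = 1 * w^N := by ring
      _ ≤ (18^N * (θ * ((2:ℝ)^(n1+1))⁻¹)) * w^N := by gcongr
      _ = 18^N * (1 * (θ * ((2:ℝ)^(n1+1))⁻¹ * w^N)) := by ring
      _ ≤ 400^N * (K * R) := by gcongr; norm_num
  · calc K * R ≤ 9^N * (3^N * w^N) := by gcongr; exact hU'.trans (by gcongr)
      _ = 27^N * w^N := by rw [← mul_assoc, ← mul_pow]; norm_num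
      _ ≤ _ := by gcongr; norm_num
end PadeX


namespace PadeX
theorem padeKey (b : ℕ) [hb : Fact b.Prime] (hb3 : b ≤ 3) (n1 n2 : ℕ) (D a0 : ℕ) (hD : 0 < D)
    (ha : a0 ≤ D) (w0 w1 ρ M : ℝ) (hw0 : w0 = a0 / D) (h1 : 0 ≤ w1) (_h1' : w1 ≤ 1)
    (hρ : 0 < ρ) (hρb : ρ^b * (1 + w1) = 1 + w0) (hM : 0 < M) (g g' : ℤ)
    (hg : M = D^n1 * g) (hg' : M * ρ = D^n2 * g') :
    w0^(n1+n2+1) ≤ 320000^(n1+n2+1) * w1 ∨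
      1 ≤ M * (320000^(n1+n2+1) * (w0^(n1+n2+1) + w1)) := by
  have hD' : (0:ℝ) < D := by exact_mod_cast hD
  have hw00 : 0 ≤ w0 := by rw [hw0]; positivity
  have hw01 : w0 ≤ 1 := by rw [hw0, div_le_one hD']; exact_mod_cast ha
  obtain ⟨q, p, hqp⟩ := pade b hb3 n1 n2
  obtain ⟨hQ, hR1, hR2⟩ := hqp w0 hw00 hw01
  set N := n1+n2+1 with hN
  set Q := ∑ k ∈ range (n2+1), (q k : ℝ) * (1+w0)^k with hQd
  set P := ∑ j ∈ range (n1+1), (p j : ℝ) * w0^j with hPd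
  have hb0 : (0:ℝ) < b := by exact_mod_cast hb.out.pos
  have hb1 : (1:ℝ) ≤ b := by exact_mod_cast hb.out.one_lt.le
  set x := (1+w1)^((1:ℝ)/b) with hx
  have hx1 : 1 ≤ x := Real.one_le_rpow (by linarith) (by positivity)
  have hx2 : x ≤ 1 + w1 := by
    calc x ≤ (1+w1)^(1:ℝ) := Real.rpow_le_rpow_of_exponent_le (by linarith) (by rw [div_le_one hb0]; exact hb1)
      _ = _ := by simp
  have hroot : (1+w0)^((1:ℝ)/b) = ρ * x := by
    rw [← hρb, Real.mul_rpow (by positivity) (by positivity), one_div, Real.pow_rpow_inv_natCast hρ.le hb.out.ne_zero, hx, one_div]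
  have hρ2 : ρ ≤ 2 := by
    by_contra hlt
    push Not at hlt
    have h3 : (2:ℝ)^b < ρ^b := pow_lt_pow_left₀ hlt (by norm_num) hb.out.ne_zero
    have h4 : (2:ℝ)^1 ≤ 2^b := pow_le_pow_right₀ (by norm_num) hb.out.one_lt.le
    nlinarith
  rw [hroot] at hR1 hR2
  have hQρ : |Q * (ρ * (x-1))| ≤ 400^N * (2 * w1) := by
    rw [abs_mul, abs_of_nonneg (by nlinarith : 0 ≤ ρ * (x-1))]
    have : ρ * (x-1) ≤ 2 * w1 := by nlinarith
    have : 0 ≤ ρ * (x-1) := by nlinarith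
    gcongr
  have h2N : (2:ℝ) ≤ 2^N := by
    calc (2:ℝ) = 2^1 := by norm_num
      _ ≤ 2^N := pow_le_pow_right₀ (by norm_num) (by omega)
  have h400 : (1:ℝ) ≤ 400^N := one_le_pow₀ (by norm_num)
  have hC : (320000:ℝ)^N = 2^N * (400^N * 400^N) := by
    rw [← mul_pow, ← mul_pow]; norm_num
  have hRdec : Q * (ρ*x) - P = Q * (ρ * (x-1)) + (Q*ρ - P) := by ring
  by_cases hz : Q*ρ - P = 0
  · left
    rw [hRdec, hz, add_zero] at hR1
    calc w0^N ≤ 400^N * (400^N * (2 * w1)) := hR1.trans (by gcongr)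
      _ ≤ 400^N * (400^N * (2^N * w1)) := by gcongr
      _ = _ := by rw [hC]; ring
  · right
    have hint : ∃ z : ℤ, M * (Q*ρ - P) = z := by
      have hQi : ∃ z : ℤ, (D:ℝ)^n2 * Q = z := by
        refine ⟨∑ k ∈ range (n2+1), q k * ((D + a0)^k * D^(n2-k)), ?_⟩
        push_cast
        rw [hQd, mul_sum]
        apply sum_congr rfl
        intro k hk
        have hk' : k ≤ n2 := by simpa [Nat.lt_succ_iff] using hk
        have h5 : (D:ℝ)^n2 = D^(n2-k) * D^k := by rw [← pow_add]; congr 1; omega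
        have h6 : (D:ℝ) + a0 = D * (1 + w0) := by rw [hw0]; field_simp
        rw [h5, h6, mul_pow]; ring
      have hPi : ∃ z : ℤ, (D:ℝ)^n1 * P = z := by
        refine ⟨∑ k ∈ range (n1+1), p k * (a0^k * D^(n1-k)), ?_⟩
        push_cast
        rw [hPd, mul_sum]
        apply sum_congr rfl
        intro k hk
        have hk' : k ≤ n1 := by simpa [Nat.lt_succ_iff] using hk
        have h5 : (D:ℝ)^n1 = D^(n1-k) * D^k := by rw [← pow_add]; congr 1; omega
        have h6 : (a0:ℝ) = D * w0 := by rw [hw0]; field_simp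
        rw [h5, h6, mul_pow]; ring
      obtain ⟨z1, hz1⟩ := hQi
      obtain ⟨z2, hz2⟩ := hPi
      refine ⟨g' * z1 - g * z2, ?_⟩
      push_cast
      rw [← hz1, ← hz2]
      linear_combination Q * hg' - P * hg
    obtain ⟨z, hz'⟩ := hint
    have hz0 : z ≠ 0 := by
      rintro rfl
      have : M * (Q*ρ - P) ≠ 0 := mul_ne_zero hM.ne' hz
      exact this (by simpa using hz')
    have h4 : (1:ℝ) ≤ |(z:ℝ)| := by exact_mod_cast Int.one_le_abs hz0
    rw [← hz', abs_mul, abs_of_pos hM] at h4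
    refine h4.trans ?_
    gcongr
    have h7 : Q*ρ - P = (Q * (ρ*x) - P) - Q * (ρ * (x-1)) := by ring
    calc |Q*ρ - P| ≤ |Q * (ρ*x) - P| + |Q * (ρ * (x-1))| := by rw [h7]; exact abs_sub _ _
      _ ≤ 400^N * w0^N + 400^N * (2*w1) := add_le_add hR2 hQρ
      _ ≤ 400^N * (2^N * w0^N) + 400^N * (2^N * w1) := by
        gcongr
        have : 0 ≤ w0^N := by positivity
        nlinarith
      _ = 2^N * (400^N * 1) * (w0^N + w1) := by ring
      _ ≤ 2^N * (400^N * 400^N) * (w0^N + w1) := by gcongr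
      _ = _ := by rw [hC]
end PadeX


namespace PadeX
lemma logKey (N : ℕ) (w0 w1 M : ℝ) (h0 : 0 < w0) (h1 : 0 < w1) (hM : 0 < M)
    (h : w0^N ≤ 320000^N * w1 ∨ 1 ≤ M * (320000^N * (w0^N + w1))) :
    N * Real.log w0 ≤ N * Real.log 320000 + Real.log w1 ∨
    0 ≤ Real.log 2 + Real.log M + N * Real.log 320000 + N * Real.log w0 ∨
    0 ≤ Real.log 2 + Real.log M + N * Real.log 320000 + Real.log w1 := by
  rcases h with hk | hk
  · left
    have := Real.log_le_log (by positivity) hk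
    rw [Real.log_pow, Real.log_mul (by positivity) (by positivity), Real.log_pow] at this
    exact this
  · right
    rw [mul_add, mul_add] at hk
    have hor : 1/2 ≤ M * (320000^N * w0^N) ∨ 1/2 ≤ M * (320000^N * w1) := by
      by_contra hcon
      push Not at hcon
      linarith
    rcases hor with hk | hk
    · left
      have := Real.log_le_log (by positivity) hk
      rw [Real.log_mul (by positivity) (by positivity), Real.log_mul (by positivity) (by positivity), Real.log_pow, Real.log_pow, one_div, Real.log_inv] at this
      linarith
    · right
      have := Real.log_le_log (by positivity) hk
      rw [Real.log_mul (by positivity) (by positivity), Real.log_mul (by positivity) (by positivity), Real.log_pow, one_div, Real.log_inv] at this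
      linarith

lemma cubicArith (n x0 x1 c l9 l2 l3 lw0 lw1 lp : ℝ) (hn : 3 ≤ n) (hx0 : 0 < x0) (hc : 0 ≤ c)
    (hl9 : 0 ≤ l9) (h6 : l2 + l3 ≤ l9) (hT : 20 * (c + l9) ≤ x0)
    (hn1 : (22/10 * n + 11/10) * x0 ≤ x1) (hn2 : x1 < (22/10 * n + 33/10) * x0)
    (hw0u : lw0 ≤ -(29/10) * x0) (hw0l : -l9 - 3 * x0 ≤ lw0) (hw1u : lw1 ≤ -(29/10) * x1)
    (hp : lp ≤ x1 + l3)
    (h : (2*n+1) * lw0 ≤ (2*n+1) * c + lw1 ∨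
      0 ≤ l2 + (n * (l9 + 3 * x0) + x0 + lp) + (2*n+1) * c + (2*n+1) * lw0 ∨
      0 ≤ l2 + (n * (l9 + 3 * x0) + x0 + lp) + (2*n+1) * c + lw1) : False := by
  have hnx : 3 * x0 ≤ n * x0 := by nlinarith
  have hnκ : n * (20 * (c + l9)) ≤ n * x0 := by gcongr
  have hn9 : 0 ≤ n * l9 := by positivity
  have hnc : 0 ≤ n * c := by positivity
  have h5 : (2*n+1) * lw0 ≤ (2*n+1) * (-(29/10) * x0) := by gcongr
  have h6' : (2*n+1) * (-l9 - 3 * x0) ≤ (2*n+1) * lw0 := by gcongr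
  rcases h with h | h | h <;> linarith
end PadeX


namespace PadeX
lemma cubic_facts (q A p : ℕ) (hA : 0 < A) (h : p^3 = 9*q^3+A^3) (hq : A^30 ≤ q) :
    0 < q ∧ 0 < p ∧ A^3 ≤ 9*q^3 ∧
    Real.log ((A:ℝ)^3/(9*q^3)) ≤ -(29/10) * Real.log q ∧
    -Real.log 9 - 3 * Real.log q ≤ Real.log ((A:ℝ)^3/(9*q^3)) ∧
    Real.log p ≤ Real.log q + Real.log 3 := by
  have hq0 : 0 < q := lt_of_lt_of_le (by positivity) hq
  have hAq : A ≤ q := (Nat.le_self_pow (by norm_num) A).trans hq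
  have hp0 : 0 < p := by
    rcases Nat.eq_zero_or_pos p with rfl | h'
    · have : 0 < A^3 := by positivity
      simp at h; omega
    · exact h'
  have hA3 : A^3 ≤ q^3 := Nat.pow_le_pow_left hAq 3
  have hA' : (0:ℝ) < A := by exact_mod_cast hA
  have hq' : (0:ℝ) < q := by exact_mod_cast hq0
  have hp' : (0:ℝ) < p := by exact_mod_cast hp0
  have hlA : 30 * Real.log A ≤ Real.log q := by
    have : ((A:ℝ)^30) ≤ q := by exact_mod_cast hq
    have := Real.log_le_log (by positivity) this
    rw [Real.log_pow] at this; exact_mod_cast this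
  have hlA0 : 0 ≤ Real.log A := Real.log_nonneg (by exact_mod_cast hA)
  have hlog : Real.log ((A:ℝ)^3/(9*q^3)) = 3 * Real.log A - (Real.log 9 + 3 * Real.log q) := by
    rw [Real.log_div (by positivity) (by positivity), Real.log_mul (by norm_num) (by positivity), Real.log_pow, Real.log_pow]
    norm_num
  have h9 : 0 ≤ Real.log 9 := Real.log_nonneg (by norm_num)
  refine ⟨hq0, hp0, by omega, ?_, ?_, ?_⟩
  · rw [hlog]; linarith
  · rw [hlog]; linarith
  · have : p ≤ q * 3 := by
      have : p^3 ≤ (q*3)^3 := by rw [mul_pow]; omega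
      exact (Nat.pow_le_pow_iff_left (by norm_num)).mp this
    rw [← Real.log_mul hq'.ne' (by norm_num)]
    exact Real.log_le_log hp' (by exact_mod_cast this)

theorem cubicBound : ∃ Q0 : ℕ, ∀ q A p : ℕ, 0 < A → p^3 = 9*q^3+A^3 → A^30 ≤ q → q ≤ Q0 := by
  have : Fact (Nat.Prime 3) := ⟨Nat.prime_three⟩
  set c := Real.log 320000 with hc
  set κ := c + Real.log 9 with hκ
  have hc0 : 0 ≤ c := Real.log_nonneg (by norm_num)
  have h90 : 0 < Real.log 9 := Real.log_pos (by norm_num)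
  have h6 : Real.log 2 + Real.log 3 ≤ Real.log 9 := by
    rw [← Real.log_mul (by norm_num) (by norm_num)]
    exact Real.log_le_log (by norm_num) (by norm_num)
  have h20 : 0 ≤ Real.log 2 := Real.log_nonneg (by norm_num)
  have h30 : 0 ≤ Real.log 3 := Real.log_nonneg (by norm_num)
  by_cases hex : ∃ q A p : ℕ, 0 < A ∧ p^3 = 9*q^3+A^3 ∧ A^30 ≤ q ∧ 20 * κ ≤ Real.log q
  · obtain ⟨q0, A0, p0, hA0, h0, hq0, hT⟩ := hex
    obtain ⟨hq0p, hp0p, hAD, hw0u, hw0l, hp0l⟩ := cubic_facts q0 A0 p0 hA0 h0 hq0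
    set x0 := Real.log q0 with hx0
    have hx0p : 0 < x0 := by linarith
    refine ⟨q0^10, ?_⟩
    intro q1 A1 p1 hA1 h1 hq1
    obtain ⟨hq1p, hp1p, hA1D, hw1u, hw1l, hp1l⟩ := cubic_facts q1 A1 p1 hA1 h1 hq1
    by_contra hlt
    push Not at hlt
    set x1 := Real.log q1 with hx1
    have hx1x : 10 * x0 ≤ x1 := by
      have h2 : ((q0:ℝ)^10) ≤ q1 := by exact_mod_cast hlt.le
      have := Real.log_le_log (by positivity) h2
      rw [Real.log_pow] at this; exact_mod_cast this
    set n := ⌊(x1/x0 - 11/10)/(22/10)⌋₊ with hn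
    have ht : 10 ≤ x1/x0 := by rw [le_div_iff₀ hx0p]; exact hx1x
    have hn1 : (n:ℝ) ≤ (x1/x0 - 11/10)/(22/10) := Nat.floor_le (by linarith)
    have hn2 : (x1/x0 - 11/10)/(22/10) < n + 1 := Nat.lt_floor_add_one _
    have hn3 : (3:ℝ) ≤ n := by
      have : 3 ≤ n := Nat.le_floor (by push_cast; linarith)
      exact_mod_cast this
    have hn1' : (22/10 * n + 11/10) * x0 ≤ x1 := by
      rw [← le_div_iff₀ hx0p]; linarith
    have hn2' : x1 < (22/10 * n + 33/10) * x0 := by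
      rw [← div_lt_iff₀ hx0p]; linarith
    have hp0' : (0:ℝ) < p0 := by exact_mod_cast hp0p
    have hp1' : (0:ℝ) < p1 := by exact_mod_cast hp1p
    have hq0' : (0:ℝ) < q0 := by exact_mod_cast hq0p
    have hq1' : (0:ℝ) < q1 := by exact_mod_cast hq1p
    have hA0' : (0:ℝ) < A0 := by exact_mod_cast hA0
    have hA1' : (0:ℝ) < A1 := by exact_mod_cast hA1
    have e0 : (p0:ℝ)^3 = 9*q0^3+A0^3 := by exact_mod_cast h0
    have e1 : (p1:ℝ)^3 = 9*q1^3+A1^3 := by exact_mod_cast h1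
    have hkey := padeKey 3 le_rfl n n (9*q0^3) (A0^3) (by positivity) hAD
      ((A0:ℝ)^3/(9*q0^3)) ((A1:ℝ)^3/(9*q1^3)) (p0*q1/(q0*p1)) ((9*q0^3)^n * (q0 * p1))
      (by push_cast; rfl) (by positivity) (by rw [div_le_one (by positivity)]; exact_mod_cast hA1D) (by positivity)
      (by
        have a1 : 1 + (A1:ℝ)^3/(9*q1^3) = p1^3/(9*q1^3) := by rw [e1]; field_simp
        have a0 : 1 + (A0:ℝ)^3/(9*q0^3) = p0^3/(9*q0^3) := by rw [e0]; field_simp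
        rw [a1, a0]; field_simp) (by positivity) (q0*p1) (p0*q1) (by push_cast; ring)
      (by push_cast; field_simp)
    have hMlog : Real.log ((9*(q0:ℝ)^3)^n * (q0 * p1)) = n * (Real.log 9 + 3 * x0) + x0 + Real.log p1 := by
      rw [Real.log_mul (by positivity) (by positivity), Real.log_pow, Real.log_mul (by norm_num) (by positivity), Real.log_mul (by positivity) (by positivity), Real.log_pow]
      push_cast; ring
    have hlk := logKey _ _ _ _ (by positivity) (by positivity) (by positivity) hkey
    rw [hMlog] at hlk
    have hN : ((n + n + 1 : ℕ) : ℝ) = 2 * n + 1 := by push_cast; ring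
    rw [hN] at hlk
    exact cubicArith n x0 x1 c _ _ _ _ _ _ hn3 hx0p hc0 h90.le h6 hT hn1' hn2' hw0u hw0l hw1u hp1l hlk
  · push Not at hex
    refine ⟨⌈Real.exp (20*κ)⌉₊, ?_⟩
    intro q A p hA h hq
    have h1 := hex q A p hA h hq
    have h2 := (cubic_facts q A p hA h hq).1
    have h3 : (q:ℝ) ≤ Real.exp (20*κ) := by
      rw [← Real.log_le_iff_le_exp (by exact_mod_cast h2)]; exact h1.le
    exact_mod_cast h3.trans (Nat.le_ceil _)
end PadeX


namespace PadeX
lemma quad_facts (d m k z : ℕ) (hk : 0 < k) (h : 3^m + k = d * z^2) (hk20 : k^20 ≤ 3^m) :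
    0 < z ∧ k ≤ 3^m ∧
    Real.log ((k:ℝ)/3^m) ≤ -(95/100) * (m * Real.log 3) ∧
    -(m * Real.log 3) ≤ Real.log ((k:ℝ)/3^m) ∧
    Real.log z ≤ (m+1) * Real.log 3 / 2 := by
  have hz : 0 < z := by
    rcases Nat.eq_zero_or_pos z with rfl | h'
    · simp at h
    · exact h'
  have hd : 0 < d := by
    rcases Nat.eq_zero_or_pos d with rfl | h'
    · simp at h
    · exact h'
  have hkm : k ≤ 3^m := (Nat.le_self_pow (by norm_num) k).trans hk20
  have hk' : (0:ℝ) < k := by exact_mod_cast hk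
  have hz' : (0:ℝ) < z := by exact_mod_cast hz
  have hlk : 20 * Real.log k ≤ m * Real.log 3 := by
    have : ((k:ℝ)^20) ≤ 3^m := by exact_mod_cast hk20
    have := Real.log_le_log (by positivity) this
    rw [Real.log_pow, Real.log_pow] at this; exact_mod_cast this
  have hlk0 : 0 ≤ Real.log k := Real.log_nonneg (by exact_mod_cast hk)
  have hlog : Real.log ((k:ℝ)/3^m) = Real.log k - m * Real.log 3 := by
    rw [Real.log_div (by positivity) (by positivity), Real.log_pow]
  refine ⟨hz, hkm, ?_, ?_, ?_⟩
  · rw [hlog]; linarith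
  · rw [hlog]; linarith
  · have : z^2 ≤ 3^(m+1) := by
      calc z^2 = 1 * z^2 := by ring
        _ ≤ d * z^2 := Nat.mul_le_mul_right _ hd
        _ ≤ _ := by rw [← h, pow_succ]; omega
    have : ((z:ℝ)^2) ≤ 3^(m+1) := by exact_mod_cast this
    have := Real.log_le_log (by positivity) this
    rw [Real.log_pow, Real.log_pow] at this
    push_cast at this; linarith

lemma quadArith (s y0 y1 c l2 h lw0 lw1 lz : ℝ) (hs : 4 ≤ s) (hy0 : 0 < y0) (hc : 0 ≤ c)
    (h6 : l2 + h/2 ≤ c) (hT : 100 * c ≤ y0)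
    (hn1 : (43/10 * s + 15/10) * y0 ≤ y1) (hn2 : y1 < (43/10 * s + 58/10) * y0)
    (hw0u : lw0 ≤ -(95/100) * y0) (hw0l : -y0 ≤ lw0) (hw1u : lw1 ≤ -(95/100) * y1)
    (hp : lz ≤ (y1 + h)/2)
    (hh : (4*s+1) * lw0 ≤ (4*s+1) * c + lw1 ∨
      0 ≤ l2 + (s * y0 + lz) + (4*s+1) * c + (4*s+1) * lw0 ∨
      0 ≤ l2 + (s * y0 + lz) + (4*s+1) * c + lw1) : False := by
  have hnx : 4 * y0 ≤ s * y0 := by nlinarith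
  have hnκ : s * (100 * c) ≤ s * y0 := by gcongr
  have h5 : (4*s+1) * lw0 ≤ (4*s+1) * (-(95/100) * y0) := by gcongr
  have h6' : (4*s+1) * (-y0) ≤ (4*s+1) * lw0 := by gcongr
  rcases hh with h | h | h <;> linarith

theorem quadBound (d par : ℕ) : ∃ M0 : ℕ, ∀ m k z : ℕ, m % 2 = par → 0 < k → 3^m + k = d * z^2 →
    k^20 ≤ 3^m → m ≤ M0 := by
  have : Fact (Nat.Prime 2) := ⟨Nat.prime_two⟩
  set c := Real.log 320000 with hc
  have hc0 : 0 ≤ c := Real.log_nonneg (by norm_num)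
  have h3p : 0 < Real.log 3 := Real.log_pos (by norm_num)
  have h6 : Real.log 2 + Real.log 3/2 ≤ c := by
    have : Real.log 2 + Real.log 3 ≤ c := by
      rw [← Real.log_mul (by norm_num) (by norm_num)]
      exact Real.log_le_log (by norm_num) (by norm_num)
    linarith
  set T := ⌈100 * c / Real.log 3⌉₊ + 1 with hTdef
  by_cases hex : ∃ m k z : ℕ, m % 2 = par ∧ 0 < k ∧ 3^m + k = d * z^2 ∧ k^20 ≤ 3^m ∧ T ≤ m
  · obtain ⟨m0, k0, z0, hp0, hk0, h0, hkk0, hT⟩ := hex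
    obtain ⟨hz0, hkm0, hw0u, hw0l, hzl0⟩ := quad_facts d m0 k0 z0 hk0 h0 hkk0
    have hm0p : 0 < m0 := by omega
    have hm0' : (0:ℝ) < m0 := by exact_mod_cast hm0p
    refine ⟨20 * m0, ?_⟩
    intro m1 k1 z1 hp1 hk1 h1 hkk1
    obtain ⟨hz1, hkm1, hw1u, hw1l, hzl1⟩ := quad_facts d m1 k1 z1 hk1 h1 hkk1
    by_contra hlt
    push Not at hlt
    obtain ⟨e, he⟩ : ∃ e, m1 = m0 + 2 * e := ⟨(m1-m0)/2, by omega⟩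
    set s := ⌊((m1:ℝ)/m0 - 15/10)/(43/10)⌋₊ with hs
    have ht : (20:ℝ) ≤ m1/m0 := by rw [le_div_iff₀ hm0']; exact_mod_cast hlt.le
    have hn1 : (s:ℝ) ≤ ((m1:ℝ)/m0 - 15/10)/(43/10) := Nat.floor_le (by linarith)
    have hn2 : ((m1:ℝ)/m0 - 15/10)/(43/10) < s + 1 := Nat.lt_floor_add_one _
    have hs4 : (4:ℝ) ≤ s := by
      have : 4 ≤ s := Nat.le_floor (by push_cast; linarith)
      exact_mod_cast this
    have hn1' : (43/10 * s + 15/10) * m0 ≤ (m1:ℝ) := by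
      rw [← le_div_iff₀ hm0']; linarith
    have hn2' : (m1:ℝ) < (43/10 * s + 58/10) * m0 := by
      rw [← div_lt_iff₀ hm0']; linarith
    have hes : 2 * (m0 * s) ≤ e := by
      have : (4 * s + 1) * (m0:ℝ) ≤ m1 := by
        refine le_trans ?_ hn1'
        gcongr <;> norm_num
      have : (4 * s + 1) * m0 ≤ m1 := by exact_mod_cast this
      nlinarith
    have hz0' : (0:ℝ) < z0 := by exact_mod_cast hz0
    have hz1' : (0:ℝ) < z1 := by exact_mod_cast hz1
    have hk0' : (0:ℝ) < k0 := by exact_mod_cast hk0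
    have hk1' : (0:ℝ) < k1 := by exact_mod_cast hk1
    have e0 : (3:ℝ)^m0 + k0 = d * z0^2 := by exact_mod_cast h0
    have e1 : (3:ℝ)^m1 + k1 = d * z1^2 := by exact_mod_cast h1
    obtain ⟨f, hf⟩ := Nat.exists_eq_add_of_le hes
    have hkey := padeKey 2 (by norm_num) s (3*s) (3^m0) k0 (by positivity) hkm0
      ((k0:ℝ)/3^m0) ((k1:ℝ)/3^m1) (z0*3^e/z1) ((3^m0)^s * z1)
      (by push_cast; rfl) (by positivity) (by rw [div_le_one (by positivity)]; exact_mod_cast hkm1) (by positivity)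
      (by
        have a1 : 1 + (k1:ℝ)/3^m1 = d * z1^2/3^m1 := by rw [← e1]; field_simp
        have a0 : 1 + (k0:ℝ)/3^m0 = d * z0^2/3^m0 := by rw [← e0]; field_simp
        rw [a1, a0, he]
        rw [pow_add, pow_mul']; field_simp) (by positivity) z1 (z0 * 3^f) (by push_cast; ring)
      (by
        push_cast; rw [hf, ← pow_mul, ← pow_mul]; field_simp
        rw [← pow_add, ← pow_add]; congr 1; ring)
    have hMlog : Real.log (((3:ℝ)^m0)^s * z1) = s * (m0 * Real.log 3) + Real.log z1 := by
      rw [Real.log_mul (by positivity) (by positivity), Real.log_pow, Real.log_pow]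
    have hlk := logKey _ _ _ _ (by positivity) (by positivity) (by positivity) hkey
    rw [hMlog] at hlk
    have hN : ((s + 3*s + 1 : ℕ) : ℝ) = 4 * s + 1 := by push_cast; ring
    rw [hN] at hlk
    have hT' : 100 * c ≤ m0 * Real.log 3 := by
      rw [← div_le_iff₀ h3p]
      refine (Nat.le_ceil _).trans ?_
      exact_mod_cast (by omega : ⌈100 * c / Real.log 3⌉₊ ≤ m0)
    refine quadArith s (m0 * Real.log 3) (m1 * Real.log 3) c _ (Real.log 3) _ _ _ hs4 (by positivity) hc0 h6 hT' ?_ ?_ hw0u hw0l hw1u ?_ hlk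
    · rw [← mul_assoc]; gcongr
    · rw [← mul_assoc]; gcongr
    · linarith
  · push Not at hex
    refine ⟨T, ?_⟩
    intro m k z hp hk h hkk
    exact (hex m k z hp hk h hkk).le
end PadeX

end

namespace PellX
open Pell
variable {d : ℤ}
lemma y_sq (γ : Solution₁ d) : (γ^2).y = 2 * γ.x * γ.y := by
  rw [pow_two, Solution₁.y_mul]; ring
lemma y_cube (γ : Solution₁ d) : (γ^3).y = γ.y * (4 * γ.x^2 - 1) := by
  rw [pow_succ, Solution₁.y_mul, y_sq, pow_two, Solution₁.x_mul]
  have := γ.prop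
  linear_combination (-γ.y) * this
lemma x_cube (γ : Solution₁ d) : (γ^3).x = γ.x * (4 * γ.x^2 - 3) := by
  rw [pow_succ, Solution₁.x_mul, y_sq, pow_two, Solution₁.x_mul]
  have := γ.prop
  linear_combination (-3*γ.x) * this

lemma y_dvd_mul (t : ℤ) (γ γ' : Solution₁ d) (h : t ∣ γ.y) (h' : t ∣ γ'.y) : t ∣ (γ * γ').y := by
  rw [Solution₁.y_mul]; exact dvd_add (Dvd.dvd.mul_left h' _) (Dvd.dvd.mul_right h _)
lemma y_dvd_pow (t : ℤ) (γ : Solution₁ d) (h : t ∣ γ.y) (n : ℕ) : t ∣ (γ^n).y := by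
  induction n with
  | zero => simp
  | succ n ih => rw [pow_succ]; exact y_dvd_mul t _ _ ih h
lemma y_dvd_zpow (t : ℤ) (γ : Solution₁ d) (h : t ∣ γ.y) (n : ℤ) : t ∣ (γ^n).y := by
  obtain ⟨k, rfl | rfl⟩ := n.eq_nat_or_neg
  · rw [zpow_natCast]; exact y_dvd_pow t γ h k
  · rw [zpow_neg, zpow_natCast, Solution₁.y_inv]; exact (dvd_neg).mpr (y_dvd_pow t γ h k)

lemma three_dvd_six (γ : Solution₁ d) : 3 ∣ (γ^6).y := by
  by_cases h : 3 ∣ γ.x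
  · rw [show 6 = 2 * 3 by norm_num, pow_mul]
    apply y_dvd_pow
    rw [y_sq]; exact Dvd.dvd.mul_right (Dvd.dvd.mul_left h _) _
  · rw [show 6 = 3 * 2 by norm_num, pow_mul]
    apply y_dvd_pow
    rw [y_cube]
    apply Dvd.dvd.mul_left
    have h1 : γ.x % 3 = 1 ∨ γ.x % 3 = 2 := by omega
    apply Int.dvd_of_emod_eq_zero
    rcases h1 with h1 | h1 <;> simp [pow_two, Int.sub_emod, Int.mul_emod, h1]

lemma lift (γ : Solution₁ d) (j : ℕ) (h : (3:ℤ)^(j+1) ∣ γ.y) : (3:ℤ)^(j+2) ∣ (γ^3).y := by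
  rw [y_cube, pow_succ (3:ℤ) (j+1)]
  apply mul_dvd_mul h
  have h1 : (3:ℤ) ∣ γ.y := (dvd_pow_self 3 (by omega)).trans h
  obtain ⟨t, ht⟩ := h1
  have := γ.prop
  rw [ht] at this
  exact ⟨1 + 4 * d * 3 * t^2, by linear_combination 4 * this⟩

lemma tower (γ : Solution₁ d) (j : ℕ) : (3:ℤ)^(j+1) ∣ (γ^(6*3^j)).y := by
  induction j with
  | zero => simpa using three_dvd_six γ
  | succ j ih => rw [show 6*3^(j+1) = (6*3^j)*3 by ring, pow_mul]; exact lift _ _ ih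

lemma x_down (γ : Solution₁ d) (j : ℕ) (h : (3:ℤ)^(j+1) ∣ (γ^3).x) : (3:ℤ)^j ∣ γ.x := by
  rw [x_cube] at h
  rcases Nat.eq_zero_or_pos j with rfl | hj
  · simp
  have h3 : (3:ℤ) ∣ γ.x := by
    have h4 : (3:ℤ) ∣ γ.x * (4 * γ.x^2 - 3) := (dvd_pow_self 3 (by omega)).trans h
    rcases Int.prime_three.dvd_or_dvd h4 with h5 | h5
    · exact h5
    · have h6 : (3:ℤ) ∣ 4 * γ.x^2 := by
        have := dvd_add h5 (dvd_refl (3:ℤ)); simpa using this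
      rcases Int.prime_three.dvd_or_dvd h6 with h7 | h7
      · norm_num at h7
      · exact Int.prime_three.dvd_of_dvd_pow h7
  obtain ⟨t, ht⟩ := h3
  have h5 : γ.x * (4 * γ.x^2 - 3) = 3 * (γ.x * (12 * t^2 - 1)) := by rw [ht]; ring
  rw [h5, pow_succ', ] at h
  have h6 := Int.dvd_of_mul_dvd_mul_left (by norm_num : (3:ℤ) ≠ 0) h
  refine IsCoprime.dvd_of_dvd_mul_right ?_ h6
  apply IsCoprime.pow_left
  exact ⟨4 * t^2, -1, by ring⟩

lemma x_grow (γ : Solution₁ d) (hx : γ.x ≠ 0) : |γ.x|^3 ≤ |(γ^3).x| := by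
  have h1 : (1:ℤ) ≤ |γ.x| := Int.one_le_abs hx
  have h2 : γ.x^2 = |γ.x|^2 := by rw [sq_abs]
  have h3 : |γ.x|^2 ≤ |4 * γ.x^2 - 3| := by
    refine le_trans ?_ (le_abs_self _)
    rw [h2]; nlinarith
  rw [x_cube, abs_mul, pow_succ']
  exact mul_le_mul_of_nonneg_left h3 (abs_nonneg _)

theorem pellBound (d : ℕ) : ∃ c : ℕ, ∀ m l z : ℕ, l ≤ m → (3^m+3^l)^2 = d*z^2+1 →
    l ≤ c ∨ 27 * l ≤ m + 82 := by
  by_cases hd0 : (0:ℤ) < d ∧ ¬ IsSquare (d:ℤ)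
  · obtain ⟨a, ha⟩ := IsFundamental.exists_of_not_isSquare hd0.1 hd0.2
    refine ⟨((a^18).y).natAbs, ?_⟩
    intro m l z hlm h
    have h' : ((3:ℤ)^m+3^l)^2 - d*z^2 = 1 := by
      have : ((3:ℤ)^m+3^l)^2 = d*z^2+1 := by exact_mod_cast h
      linarith
    set U : ℤ := 3^m+3^l with hU
    obtain ⟨n, hn⟩ := ha.eq_zpow_or_neg_zpow (Solution₁.mk U z h')
    have hUdvd : (3:ℤ)^l ∣ U := dvd_add (pow_dvd_pow _ hlm) (dvd_refl _)
    have hUx : |(a^n).x| = U := by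
      have : U = (Solution₁.mk U z h').x := by simp
      have hU0 : 0 < U := by positivity
      rcases hn with hn | hn
      · rw [← hn]; simp [abs_of_pos hU0]
      · have : a^n = -(Solution₁.mk U z h') := by rw [hn]; simp
        rw [this]; simp [abs_of_pos hU0]
    have hxd : (3:ℤ)^l ∣ (a^n).x := by rw [← dvd_abs, hUx]; exact hUdvd
    by_cases h27 : (27:ℤ) ∣ n
    · right
      obtain ⟨k, rfl⟩ := h27
      have e1 : a^(27*k) = (((a^k)^3)^3)^3 := by
        rw [← pow_mul, ← pow_mul, ← zpow_natCast, ← zpow_mul]; congr 1; push_cast; ring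
      rw [e1] at hUx hxd
      rcases Nat.lt_or_ge l 3 with hl | hl
      · omega
      obtain ⟨j, rfl⟩ := Nat.exists_eq_add_of_le' hl
      have d1 := x_down _ _ (show (3:ℤ)^(j+2+1) ∣ _ from hxd)
      have d2 := x_down _ _ (show (3:ℤ)^(j+1+1) ∣ _ from d1)
      have d3 := x_down _ _ d2
      have hd : (d:ℤ) ≠ 0 := hd0.1.ne'
      have hx0 : ∀ γ : Solution₁ (d:ℤ), γ.x ≠ 0 := by
        intro γ hγ
        have := γ.prop
        rw [hγ] at this
        nlinarith [mul_nonneg hd0.1.le (sq_nonneg γ.y)]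
      have g1 := x_grow (a^k) (hx0 _)
      have g2 := x_grow ((a^k)^3) (hx0 _)
      have g3 := x_grow (((a^k)^3)^3) (hx0 _)
      rw [hUx] at g3
      have g4 : (3:ℤ)^j ≤ |(a^k).x| := by
        apply Int.le_of_dvd (abs_pos.mpr (hx0 _)); rw [dvd_abs]; exact d3
      have g5 : (((((3:ℤ)^j)^3)^3)^3) ≤ U := by
        calc (((((3:ℤ)^j)^3)^3)^3) ≤ (((|(a^k).x|^3)^3)^3) := by gcongr
          _ ≤ ((|((a^k)^3).x|^3)^3) := by gcongr
          _ ≤ (|(((a^k)^3)^3).x|^3) := by gcongr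
          _ ≤ U := g3
      have g6 : U ≤ 3^(m+1) := by
        have : (3:ℤ)^(j+3) ≤ 3^m := pow_le_pow_right₀ (by norm_num) hlm
        have : (0:ℤ) < 3^m := by positivity
        rw [hU, pow_succ (3:ℤ) m]; linarith
      rw [← pow_mul, ← pow_mul, ← pow_mul] at g5
      have g7 := (pow_le_pow_iff_right₀ (by norm_num : (1:ℤ) < 3)).mp (g5.trans g6)
      omega
    · left
      have hy2 : (3:ℤ)^l ∣ (a^(2*n)).y := by
        rw [mul_comm, zpow_mul, zpow_ofNat, y_sq]
        exact Dvd.dvd.mul_right (Dvd.dvd.mul_left hxd _) _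
      have hy3 : (3:ℤ)^l ∣ (a^(6*3^l)).y := (pow_dvd_pow _ (by omega)).trans (tower a l)
      set g := Int.gcd (2*n) ((6*3^l : ℕ):ℤ) with hg
      have hyg : (3:ℤ)^l ∣ (a^(g:ℤ)).y := by
        rw [hg, Int.gcd_eq_gcd_ab, zpow_add, zpow_mul a (2*n), zpow_mul a ((6*3^l:ℕ):ℤ)]
        apply y_dvd_mul
        · exact y_dvd_zpow _ _ hy2 _
        · apply y_dvd_zpow; rw [zpow_natCast]; exact hy3
      have hg18 : g ∣ 18 := by
        have h1 : g ∣ 2 * 3^(l+1) := by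
          have : g ∣ 6*3^l := by
            have := Int.gcd_dvd_right (2*n) ((6*3^l : ℕ):ℤ); exact_mod_cast this
          rw [show 2 * 3^(l+1) = 6 * 3^l by ring]; exact this
        obtain ⟨g1, g2, hg1, hg2, hgg⟩ := (Nat.dvd_mul).1 h1
        obtain ⟨j, _, hj⟩ := (Nat.dvd_prime_pow Nat.prime_three).1 hg2
        have h2 : ((3^j : ℕ):ℤ) ∣ 2 * n := by
          have h3 : (g:ℤ) ∣ 2*n := Int.gcd_dvd_left (2*n) ((6*3^l : ℕ):ℤ)
          refine dvd_trans ?_ h3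
          rw [← hgg, hj]; push_cast; exact dvd_mul_left _ _
        have h3 : (3:ℤ)^j ∣ n := by
          push_cast at h2
          refine IsCoprime.dvd_of_dvd_mul_left ?_ h2
          exact IsCoprime.pow_left ⟨1, -1, by norm_num⟩
        have h4 : j ≤ 2 := by
          by_contra hj3
          apply h27
          exact dvd_trans (by rw [show (27:ℤ) = 3^3 by norm_num]; exact pow_dvd_pow _ (by omega)) h3
        rw [← hgg, hj, show 18 = 2 * 3^2 by norm_num]
        exact mul_dvd_mul hg1 (pow_dvd_pow _ h4)
      obtain ⟨t, ht⟩ := hg18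
      have hy18 : (3:ℤ)^l ∣ (a^18).y := by
        rw [ht, pow_mul]; apply y_dvd_pow; rw [zpow_natCast] at hyg; exact hyg
      have hne : (a^18).y ≠ 0 := (ha.y_strictMono (by norm_num : (0:ℤ) < 18)).ne' |> (by simpa using ·)
      have h5 := Int.natAbs_dvd_natAbs.mpr hy18
      have h6 := Nat.le_of_dvd (Int.natAbs_pos.mpr hne) h5
      rw [Int.natAbs_pow] at h6
      exact (Nat.lt_pow_self (by norm_num : 1 < 3)).le.trans h6
  · refine ⟨0, ?_⟩
    intro m l z hlm h
    exfalso
    have hsq : IsSquare (d:ℤ) := by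
      by_contra hns
      apply hd0
      refine ⟨?_, hns⟩
      rcases Nat.eq_zero_or_pos d with h0 | h0
      · exfalso; apply hns; rw [h0]; simp
      · exact_mod_cast h0
    obtain ⟨r, hr⟩ := hsq
    have h' : ((3:ℤ)^m+3^l)^2 = d*z^2+1 := by exact_mod_cast h
    rw [hr] at h'
    have h1 : ((3:ℤ)^m+3^l - r*z) * ((3:ℤ)^m+3^l+r*z) = 1 := by linear_combination h'
    have h2 : (1:ℤ) ≤ 3^m := one_le_pow₀ (by norm_num)
    have h3 : (1:ℤ) ≤ 3^l := one_le_pow₀ (by norm_num)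
    rcases Int.mul_eq_one_iff_eq_one_or_neg_one.mp h1 with ⟨h4, h5⟩ | ⟨h4, h5⟩ <;> linarith
end PellX


namespace EisX
open NumberField in
lemma eisRing : ∃ (R : Type) (_ : CommRing R) (_ : IsDomain R) (_ : IsPrincipalIdealRing R) (w : R),
    w^2 + w + 1 = 0 ∧ (∀ x : R, ∃ p q : ℤ, x = p + q * w) ∧
    (∀ p q : ℤ, (p:R) + q * w = 0 → p = 0 ∧ q = 0) ∧
    (∀ u : R, IsUnit u → u = 1 ∨ u = -1 ∨ u = w ∨ u = -w ∨ u = w^2 ∨ u = -w^2) := by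
  have hcyc : IsCyclotomicExtension {3} ℚ (CyclotomicField 3 ℚ) := CyclotomicField.isCyclotomicExtension 3 ℚ
  have hζ := IsCyclotomicExtension.zeta_spec 3 ℚ (CyclotomicField 3 ℚ)
  have hpid := IsCyclotomicExtension.Rat.three_pid (CyclotomicField 3 ℚ)
  have hw : hζ.toInteger^2 + hζ.toInteger + 1 = 0 :=
    IsCyclotomicExtension.Rat.Three.eta_sq_add_eta_add_one hζ
  have hdim : hζ.integralPowerBasis.dim = 2 := by
    rw [IsPrimitiveRoot.integralPowerBasis_dim]; decide
  have hgen := IsPrimitiveRoot.integralPowerBasis_gen hζ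
  refine ⟨𝓞 (CyclotomicField 3 ℚ), inferInstance, inferInstance, hpid, hζ.toInteger, hw, ?_, ?_, ?_⟩
  · intro x
    let b := hζ.integralPowerBasis.basis.reindex (finCongr hdim)
    have := b.sum_repr x
    rw [Fin.sum_univ_two] at this
    refine ⟨b.repr x 0, b.repr x 1, ?_⟩
    refine this.symm.trans ?_
    simp [b]
  · intro p q h
    let b := hζ.integralPowerBasis.basis.reindex (finCongr hdim)
    have h1 := b.linearIndependent
    rw [Fintype.linearIndependent_iff] at h1
    have := h1 ![p, q] (by simp [Fin.sum_univ_two, b, h])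
    exact ⟨by simpa using this 0, by simpa using this 1⟩
  · intro u hu
    have := IsCyclotomicExtension.Rat.Three.Units.mem hζ hu.unit
    simp only [List.mem_cons, List.not_mem_nil, or_false, Units.ext_iff] at this
    simpa using this

lemma eis (A R s : ℤ) (h3 : 3 ∣ R) (hA : ¬ 3 ∣ A)
    (hcop : IsCoprime (A^2-3*A*R+3*R^2) (3*R^2)) (h : A^2-3*A*R+3*R^2 = s^3) :
    ∃ p q : ℤ, A - R = p^3+q^3-3*p*q^2 ∧ R = 3*p*q*(p-q) := by
  obtain ⟨O, _, _, _, w, hw, hex, hlin, hun⟩ := eisRing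
  have hb : ((A:O) - (1 - w) * R) * ((A:O) - (1 - w^2) * R) = (s:O)^3 := by
    have : (s:O)^3 = A^2-3*A*R+3*R^2 := by exact_mod_cast congrArg (Int.cast : ℤ → O) h.symm
    rw [this]
    linear_combination (A * R + (w-2) * R^2 : O) * hw
  have hc : IsCoprime ((A:O) - (1 - w) * R) ((A:O) - (1 - w^2) * R) := by
    obtain ⟨u, v, huv⟩ := hcop
    rw [h] at huv
    have huv' : (u:O) * (s:O)^3 + v * (3 * R^2) = 1 := by exact_mod_cast congrArg (Int.cast : ℤ → O) huv
    rw [← hb] at huv'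
    generalize hβ : (A:O) - (1 - w) * R = β at *
    generalize hβ' : (A:O) - (1 - w^2) * R = β' at *
    have e : (β - β')^2 = -3 * (R:O)^2 := by
      rw [← hβ, ← hβ']; linear_combination ((w^2 - 3 * w + 3) * R^2 : O) * hw
    refine ⟨u * β' - v * β + 2 * v * β', - v * β', ?_⟩
    linear_combination huv' - (v:O) * e
  obtain ⟨α, u, hα⟩ := exists_associated_pow_of_mul_eq_pow' hc hb
  obtain ⟨p, q, rfl⟩ := hex α
  have hcube : ((p:O) + q * w)^3 = (p^3+q^3-3*p*q^2) + 3*p*q*(p-q) * w := by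
    linear_combination (3*p*q^2 + q^3 * w - q^3 : O) * hw
  rw [hcube] at hα
  have key : ∀ x y : ℤ, (x:O) + y * w = (A:O) - (1 - w) * R → x = A - R ∧ y = R := by
    intro x y hxy
    have := hlin (x - (A - R)) (y - R) (by push_cast; linear_combination hxy)
    constructor <;> linarith [this.1, this.2]
  obtain ⟨R', hR'⟩ := h3
  rcases hun _ u.isUnit with hu | hu | hu | hu | hu | hu
  · refine ⟨p, q, ?_⟩
    have := key (p^3+q^3-3*p*q^2) (3*p*q*(p-q)) (by rw [← hα, hu]; push_cast; ring)
    exact ⟨this.1.symm, this.2.symm⟩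
  · refine ⟨-p, -q, ?_⟩
    have := key (-(p^3+q^3-3*p*q^2)) (-(3*p*q*(p-q))) (by rw [← hα, hu]; push_cast; ring)
    constructor <;> linarith [this.1, this.2]
  · exfalso
    have := key (-(3*p*q*(p-q))) (p^3+q^3-3*p*q^2 - 3*p*q*(p-q)) (by
      rw [← hα, hu]; push_cast; linear_combination (-(3*p*q*(p-q)) : O) * hw)
    apply hA
    exact ⟨R' - p*q*(p-q), by linarith [this.1, this.2]⟩
  · exfalso
    have := key ((3*p*q*(p-q))) (-(p^3+q^3-3*p*q^2 - 3*p*q*(p-q))) (by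
      rw [← hα, hu]; push_cast; linear_combination ((3*p*q*(p-q)) : O) * hw)
    apply hA
    exact ⟨R' + p*q*(p-q), by linarith [this.1, this.2]⟩
  · exfalso
    have := key (-(p^3+q^3-3*p*q^2)+3*p*q*(p-q)) (-(p^3+q^3-3*p*q^2)) (by
      rw [← hα, hu]; push_cast
      linear_combination (-(p^3+q^3-3*p*q^2) - (3*p*q*(p-q))*(w-1) : O) * hw)
    apply hA
    exact ⟨2*R' + p*q*(p-q), by linarith [this.1, this.2]⟩
  · exfalso
    have := key ((p^3+q^3-3*p*q^2)-3*p*q*(p-q)) ((p^3+q^3-3*p*q^2)) (by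
      rw [← hα, hu]; push_cast
      linear_combination ((p^3+q^3-3*p*q^2) + (3*p*q*(p-q))*(w-1) : O) * hw)
    apply hA
    exact ⟨2*R' - p*q*(p-q), by linarith [this.1, this.2]⟩


lemma cop3 (x : ℤ) (h : ¬ 3 ∣ x) : IsCoprime x 3 :=
  ((Int.prime_three.coprime_iff_not_dvd).mpr h).symm

lemma tripleAux (e : ℤ) (he : e = 3 ∨ e = 9) (u v w t : ℤ) (h : u + v + w = 0) (ht : u*v*w = e*t^3)
    (hc : IsCoprime u v) (hw : 3 ∣ w) :
    ∃ x y z : ℤ, x^3+y^3 = e*z^3 ∧ (x*y*z)^3 = (-t)^3 ∧ IsCoprime x y ∧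
      u^2+u*v+v^2 = x^6+x^3*y^3+y^6 := by
  have hu : ¬ 3 ∣ u := by
    intro h1
    have h2 : (3:ℤ) ∣ v := by omega
    have := hc.isUnit_of_dvd' h1 h2
    rw [Int.isUnit_iff] at this; omega
  have hv : ¬ 3 ∣ v := by
    intro h1
    have h2 : (3:ℤ) ∣ u := by omega
    exact hu h2
  have hcw : IsCoprime (u*v) e := by
    have h1 : IsCoprime (u*v) 3 := (cop3 u hu).mul_left (cop3 v hv)
    rcases he with rfl | rfl
    · exact h1
    · rw [show (9:ℤ) = 3^2 by norm_num]; exact h1.pow_right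
  have hew : e ∣ w := hcw.symm.dvd_of_dvd_mul_left ⟨t^3, ht⟩
  obtain ⟨z', hz'⟩ := hew
  have he0 : e ≠ 0 := by rcases he with rfl | rfl <;> norm_num
  have h1 : u*v*z' = t^3 := by
    apply mul_left_cancel₀ he0
    rw [← ht, hz']; ring
  have huw : IsCoprime u w := by
    rw [show w = -v + u * (-1) by linarith]; exact (hc.neg_right).add_mul_left_right _
  have hvw : IsCoprime v w := by
    rw [show w = -u + v * (-1) by linarith]; exact (hc.symm.neg_right).add_mul_left_right _
  have huz : IsCoprime u z' := by rw [hz'] at huw; exact huw.of_mul_right_right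
  have hvz : IsCoprime v z' := by rw [hz'] at hvw; exact hvw.of_mul_right_right
  have odd3 : Odd 3 := by decide
  obtain ⟨x, hx⟩ := Int.eq_pow_of_mul_eq_pow_odd_left (hc.mul_right huz) odd3
    (show u * (v*z') = t^3 by rw [← h1]; ring)
  obtain ⟨y, hy⟩ := Int.eq_pow_of_mul_eq_pow_odd_left (hc.symm.mul_right hvz) odd3
    (show v * (u*z') = t^3 by rw [← h1]; ring)
  obtain ⟨z, hz⟩ := Int.eq_pow_of_mul_eq_pow_odd_left (huz.mul_left hvz).symm odd3
    (show z' * (u*v) = t^3 by rw [← h1]; ring)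
  refine ⟨x, y, -z, ?_, ?_, ?_, ?_⟩
  · rw [← hx, ← hy]; rw [hz', hz] at h; linear_combination h
  · rw [hx, hy, hz] at h1; linear_combination -h1
  · rw [hx, hy] at hc; exact (IsCoprime.pow_iff (by norm_num) (by norm_num)).mp hc
  · rw [hx, hy]; ring

lemma triple (e : ℤ) (he : e = 3 ∨ e = 9) (u v w t : ℤ) (h : u + v + w = 0) (ht : u*v*w = e*t^3)
    (hc : IsCoprime u v) :
    ∃ x y z : ℤ, x^3+y^3 = e*z^3 ∧ (x*y*z)^3 = (-t)^3 ∧ IsCoprime x y ∧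
      u^2+u*v+v^2 = x^6+x^3*y^3+y^6 := by
  have huw : IsCoprime u w := by
    rw [show w = -v + u * (-1) by linarith]; exact (hc.neg_right).add_mul_left_right _
  have hvw : IsCoprime v w := by
    rw [show w = -u + v * (-1) by linarith]; exact (hc.symm.neg_right).add_mul_left_right _
  have h3 : (3:ℤ) ∣ u*v*w := by
    rw [ht]; apply Dvd.dvd.mul_right; rcases he with rfl | rfl <;> norm_num
  rcases Int.prime_three.dvd_or_dvd h3 with h3 | h3
  · rcases Int.prime_three.dvd_or_dvd h3 with h3 | h3
    · obtain ⟨x, y, z, h1, h2, h4, h5⟩ := tripleAux e he v w u t (by linarith) (by linarith) hvw h3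
      refine ⟨x, y, z, h1, h2, h4, ?_⟩
      rw [← h5, show w = -u-v by linarith]; ring
    · obtain ⟨x, y, z, h1, h2, h4, h5⟩ := tripleAux e he u w v t (by linarith) (by linarith) huw h3
      refine ⟨x, y, z, h1, h2, h4, ?_⟩
      rw [← h5, show w = -u-v by linarith]; ring
  · exact tripleAux e he u v w t h ht hc h3

lemma descent (e : ℤ) (he : e = 3 ∨ e = 9) (A B C : ℤ) (h : A^3+B^3 = e*C^3) (hc : IsCoprime A B)
    (hC : 3 ∣ C) :
    ∃ x y z : ℤ, x^3+y^3 = e*z^3 ∧ IsCoprime x y ∧ 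
      C = 3*(x*y*z)*(x^6+x^3*y^3+y^6) := by
  have inj : ∀ a b : ℤ, a^3 = b^3 → a = b := fun a b hab => (Odd.strictMono_pow (by decide : Odd 3)).injective hab
  have odd3 : Odd 3 := by decide
  have he3 : (3:ℤ) ∣ e := by rcases he with rfl | rfl <;> norm_num
  have hs : (3:ℤ) ∣ A + B := by
    have h1 : (3:ℤ) ∣ (A+B)^3 := by
      rw [show (A+B)^3 = e*C^3 + 3*(A*B*(A+B)) by rw [← h]; ring]
      exact dvd_add (Dvd.dvd.mul_right he3 _) (dvd_mul_right _ _)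
    exact Int.prime_three.dvd_of_dvd_pow h1
  obtain ⟨R, hR⟩ := hs
  have hA : ¬ 3 ∣ A := by
    intro h1
    have h2 : (3:ℤ) ∣ B := by omega
    have := hc.isUnit_of_dvd' h1 h2
    rw [Int.isUnit_iff] at this; omega
  have hB : B = 3*R - A := by linarith
  subst hB
  have hA3 := cop3 A hA
  have hAR3 : IsCoprime A (3*R) := by
    rw [show 3*R = (3*R-A) + A*1 by ring]; exact hc.add_mul_left_right _
  have hAR : IsCoprime A R := hAR3.of_mul_right_right
  obtain ⟨S, hS⟩ : ∃ S, S = A^2-3*A*R+3*R^2 := ⟨_, rfl⟩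
  have hSR : IsCoprime S R := by
    rw [hS, show A^2-3*A*R+3*R^2 = A^2 + R*(3*R-3*A) by ring]
    exact (hAR.pow_left).add_mul_left_left _
  have hS3 : IsCoprime S 3 := by
    rw [hS, show A^2-3*A*R+3*R^2 = A^2 + 3*(R^2-A*R) by ring]
    exact (hA3.pow_left).add_mul_left_left _
  have hprod : 9*(R*S) = e*C^3 := by rw [← h, hS]; ring
  -- get s, r₁ with S = s^3, 3R = e * 9 * r1^3, C = 3 r1 s
  obtain ⟨s, r, hs, hr, hCr⟩ : ∃ s r : ℤ, S = s^3 ∧ R = 3 * e * r^3 ∧ C = 3 * r * s := by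
    rcases he with rfl | rfl
    · have h1 : (3*R)*S = C^3 := by linarith
      have hco : IsCoprime (3*R) S := (hS3.mul_right hSR).symm
      obtain ⟨s, hs⟩ := Int.eq_pow_of_mul_eq_pow_odd_right hco odd3 h1
      obtain ⟨r, hr⟩ := Int.eq_pow_of_mul_eq_pow_odd_left hco odd3 h1
      have : (3:ℤ) ∣ r := Int.prime_three.dvd_of_dvd_pow (n := 3) ⟨R, hr.symm⟩
      obtain ⟨r1, rfl⟩ := this
      refine ⟨s, r1, hs, by linarith [hr, show (3*r1)^3 = 27*r1^3 by ring], ?_⟩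
      apply inj; rw [← h1, hr, hs]; ring
    · have h1 : R*S = C^3 := by linarith
      obtain ⟨s, hs⟩ := Int.eq_pow_of_mul_eq_pow_odd_right hSR.symm odd3 h1
      obtain ⟨r, hr⟩ := Int.eq_pow_of_mul_eq_pow_odd_left hSR.symm odd3 h1
      have hCrs : C = r * s := by apply inj; rw [← h1, hr, hs]; ring
      have : (3:ℤ) ∣ r := by
        rw [hCrs] at hC
        rcases Int.prime_three.dvd_or_dvd hC with h3 | h3
        · exact h3
        · exfalso
          rw [hs] at hS3
          have := hS3.isUnit_of_dvd' (dvd_pow h3 (by norm_num)) (dvd_refl _)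
          rw [Int.isUnit_iff] at this; omega
      obtain ⟨r1, rfl⟩ := this
      refine ⟨s, r1, hs, by rw [hr]; ring, by rw [hCrs]⟩
  have hR3 : (3:ℤ) ∣ R := by rw [hr, mul_assoc]; exact dvd_mul_right _ _
  obtain ⟨p, q, hp, hq⟩ := eis A R s hR3 hA (by rw [← hS]; exact hS3.mul_right hSR.pow_right) (by rw [← hS, hs])
  have hpq : IsCoprime p q := by
    rw [Int.isCoprime_iff_gcd_eq_one]
    by_contra hg
    obtain ⟨l, hl, hlg⟩ := Nat.exists_prime_and_dvd hg
    have h1 : (l:ℤ) ∣ p := (Int.natCast_dvd_natCast.mpr hlg).trans (Int.gcd_dvd_left _ _)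
    have h2 : (l:ℤ) ∣ q := (Int.natCast_dvd_natCast.mpr hlg).trans (Int.gcd_dvd_right _ _)
    have h3 : (l:ℤ) ∣ R := by rw [hq]; exact Dvd.dvd.mul_right (Dvd.dvd.mul_left h2 _) _
    have h4 : (l:ℤ) ∣ A := by
      rw [show A = R + (p^3+q^3-3*p*q^2) by linarith]
      refine dvd_add h3 (dvd_sub (dvd_add (dvd_pow h1 (by norm_num)) (dvd_pow h2 (by norm_num))) ?_)
      exact Dvd.dvd.mul_left (dvd_pow h2 (by norm_num)) _
    have h5 := hAR.isUnit_of_dvd' h4 h3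
    rw [Int.isUnit_iff] at h5
    have := hl.two_le
    omega
  have hsN : s = p^2-p*q+q^2 := by
    apply inj
    rw [← hs, hS, show A = R + (p^3+q^3-3*p*q^2) by linarith, hq]; ring
  obtain ⟨x, y, z, h1, h2, h3, h4⟩ := triple e he (-p) q (p-q) (-r) (by ring) (by
    apply mul_left_cancel₀ (show (3:ℤ) ≠ 0 by norm_num)
    linear_combination hq - hr) hpq.neg_left
  refine ⟨x, y, z, h1, h3, ?_⟩
  have h5 : x*y*z = r := inj _ _ (by rw [h2, neg_neg])
  rw [← h4, h5, hCr, hsN]; ring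

lemma descentBound (e : ℤ) (he : e = 3 ∨ e = 9) (A B C : ℤ) (h : A^3+B^3 = e*C^3) (hc : IsCoprime A B)
    (hC : 3 ∣ C) (hC0 : C ≠ 0) (i : ℕ) (hi : (3:ℤ)^(i+1) ∣ C) :
    ∃ x y z : ℤ, x^3+y^3 = e*z^3 ∧ IsCoprime x y ∧ z ≠ 0 ∧ (3:ℤ)^i ∣ z ∧
      18 * (e^2 * |z|^7) ≤ 8 * |C| := by
  obtain ⟨x, y, z, h1, h2, h3⟩ := descent e he A B C h hc hC
  have hx0 : x ≠ 0 := by rintro rfl; apply hC0; rw [h3]; ring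
  have hy0 : y ≠ 0 := by rintro rfl; apply hC0; rw [h3]; ring
  have hz0 : z ≠ 0 := by rintro rfl; apply hC0; rw [h3]; ring
  have he3 : (3:ℤ) ∣ e := by rcases he with rfl | rfl <;> norm_num
  have hs : (3:ℤ) ∣ x + y := by
    have h1 : (3:ℤ) ∣ (x+y)^3 := by
      rw [show (x+y)^3 = e*z^3 + 3*(x*y*(x+y)) by rw [← h1]; ring]
      exact dvd_add (Dvd.dvd.mul_right he3 _) (dvd_mul_right _ _)
    exact Int.prime_three.dvd_of_dvd_pow h1
  have hx3 : ¬ 3 ∣ x := by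
    intro h1
    have h2' : (3:ℤ) ∣ y := by omega
    have := h2.isUnit_of_dvd' h1 h2'
    rw [Int.isUnit_iff] at this; omega
  have hy3 : ¬ 3 ∣ y := fun h => hx3 (by omega)
  refine ⟨x, y, z, h1, h2, hz0, ?_, ?_⟩
  · have hN : IsCoprime (x^6+x^3*y^3+y^6) 3 := by
      obtain ⟨t, ht⟩ := hs
      rw [show x^6+x^3*y^3+y^6 = -(x^3*y^3) + 3 * (t * (x^2-x*y+y^2) * (x^3+y^3)) by
        linear_combination ((x^2-x*y+y^2) * (x^3+y^3)) * ht]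
      exact (((cop3 x hx3).pow_left.mul_left (cop3 y hy3).pow_left).neg_left).add_mul_left_left _
    rw [h3, pow_succ', mul_assoc] at hi
    have h4 := Int.dvd_of_mul_dvd_mul_left (by norm_num : (3:ℤ) ≠ 0) hi
    have h5 : IsCoprime ((x*y)*(x^6+x^3*y^3+y^6)) ((3:ℤ)^i) :=
      (((cop3 x hx3).mul_left (cop3 y hy3)).mul_left hN).pow_right
    refine h5.symm.dvd_of_dvd_mul_left (h4.trans (dvd_of_eq (by ring)))
  · have hN : 3 * (e^2 * |z|^6) ≤ 4 * (x^6+x^3*y^3+y^6) := by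
      have : e^2 * |z|^6 = (x^3+y^3)^2 := by
        rw [h1, show |z|^6 = (|z|^2)^3 by ring, sq_abs]; ring
      rw [this]; nlinarith [sq_nonneg (x^3-y^3)]
    have hNpos : 0 ≤ x^6+x^3*y^3+y^6 := by nlinarith [sq_nonneg (x^3-y^3), sq_nonneg (x^3+y^3)]
    have hxy : 1 ≤ |x*y| := Int.one_le_abs (mul_ne_zero hx0 hy0)
    rw [h3, abs_mul, abs_mul, abs_mul, abs_of_nonneg hNpos, abs_of_pos (show (0:ℤ) < 3 by norm_num)]
    generalize x^6+x^3*y^3+y^6 = N at *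
    calc 18 * (e^2 * |z|^7) = 6 * (3 * (e^2 * |z|^6)) * |z| := by ring
      _ ≤ 6 * (4 * N) * |z| := by gcongr
      _ = (24 * N * |z|) * 1 := by ring
      _ ≤ (24 * N * |z|) * (|x*y|) := by gcongr
      _ = _ := by ring

lemma no3 (n : ℕ) : ∀ A B C : ℤ, C.natAbs ≤ n → A^3+B^3 = 3*C^3 → IsCoprime A B → C = 0 := by
  induction n with
  | zero => intro A B C h _ _; simpa using h
  | succ n ih =>
    intro A B C hn h hc
    by_contra hC0
    have h3 : (3:ℤ) ∣ C := by
      have hs : (3:ℤ) ∣ A + B := by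
        have h1 : (3:ℤ) ∣ (A+B)^3 := ⟨C^3 + (A*B*(A+B)), by linear_combination h⟩
        exact Int.prime_three.dvd_of_dvd_pow h1
      obtain ⟨t, ht⟩ := hs
      have : (3:ℤ) ∣ C^3 := ⟨3*t^3 - A*B*t, by
        have : 3 * C^3 = 3 * (3 * (3*t^3 - A*B*t)) := by
          rw [← h, show A^3+B^3 = (A+B)^3 - 3*(A*B)*(A+B) by ring, ht]; ring
        linarith⟩
      exact Int.prime_three.dvd_of_dvd_pow this
    obtain ⟨x, y, z, h1, h2, h4, _, h5⟩ := descentBound 3 (Or.inl rfl) A B C h hc h3 hC0 0 (by simpa using h3)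
    apply h4
    apply ih x y z _ h1 h2
    have hz : 1 ≤ |z| := Int.one_le_abs h4
    have h6 : |z| ≤ |z|^7 := le_self_pow₀ hz (by norm_num)
    have h7 : |z| < |C| := by linarith
    rw [Int.abs_eq_natAbs, Int.abs_eq_natAbs] at h7
    omega

lemma grow9 (i : ℕ) : ∀ A B C : ℤ, (3:ℤ)^i ∣ C → A^3+B^3 = 9*C^3 → IsCoprime A B → C ≠ 0 →
    (2:ℤ)^(7^i-1) ≤ |C| := by
  induction i with
  | zero => intro A B C _ _ _ h; simpa using Int.one_le_abs h
  | succ i ih =>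
    intro A B C hi h hc hC0
    obtain ⟨x, y, z, h1, h2, h4, h6, h5⟩ := descentBound 9 (Or.inr rfl) A B C h hc
      ((dvd_pow_self 3 (by omega)).trans hi) hC0 i hi
    have h7 := ih x y z h6 h1 h2 h4
    have h8 : 7^(i+1) - 1 = (7^i-1)*7 + 6 := by
      have : 1 ≤ 7^i := Nat.one_le_pow _ _ (by norm_num)
      rw [pow_succ]; omega
    have h9 : ((2:ℤ)^(7^i-1))^7 ≤ |z|^7 := by gcongr
    rw [h8, pow_add, pow_mul]
    have h10 : 0 ≤ |z|^7 := by positivity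
    linarith
end EisX


namespace EisX
lemma strip3 (x : ℤ) (h : x ≠ 0) : ∃ (k : ℕ) (y : ℤ), x = 3^k * y ∧ ¬ 3 ∣ y := by
  obtain ⟨y, hy, h2⟩ := (Int.finiteMultiplicity_iff.mpr ⟨by norm_num, h⟩ : FiniteMultiplicity (3:ℤ) x).exists_eq_pow_mul_and_not_dvd
  exact ⟨_, y, hy, h2⟩

lemma val3 (p q r : ℕ) (x y z : ℤ) (hx : ¬ 3 ∣ x) (h : 3^p*x+3^q*y+3^r*z = 0) : ¬ (p < q ∧ p < r) := by
  rintro ⟨h1, h2⟩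
  obtain ⟨i, rfl⟩ := Nat.exists_eq_add_of_lt h1
  obtain ⟨j, rfl⟩ := Nat.exists_eq_add_of_lt h2
  apply hx
  have h3 : (3:ℤ)^p * (x + 3*(3^i*y) + 3*(3^j*z)) = 0 := by rw [← h]; ring
  have h4 := (mul_eq_zero.mp h3).resolve_left (by positivity)
  exact ⟨-(3^i*y) - 3^j*z, by linarith⟩

lemma coreBound (Q0 : ℕ) (hQ0 : ∀ q A p : ℕ, 0 < A → p^3 = 9*q^3+A^3 → A^30 ≤ q → q ≤ Q0)
    (W : ℕ) (hW1 : Q0 ≤ W) (hW2 : 9^120 ≤ W)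
    (l κ : ℕ) (hκ : 0 < κ) (hl : 0 < l) (a c p : ℤ) (ha : 0 < a) (hc : 0 < c)
    (h1 : p = 9^κ * a + c) (h2 : p^3 = a^3 + 9^l*c^3) (hcop : IsCoprime a p) :
    l + κ ≤ 3*W+1 + (9^(3*W+1) + 9 * W) := by
  have hp : 0 < p := by rw [h1]; positivity
  have hal : a < 9^l := by
    have hd : a ∣ (9^l - 1) * c^3 := ⟨(9^κ)^3*a^2 + 3*(9^κ)^2*a*c+3*9^κ*c^2 - a^2, by
      rw [h1] at h2; linear_combination -h2⟩
    have hac : IsCoprime a c := by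
      rw [show c = p + a * (-9^κ) by rw [h1]; ring]; exact hcop.add_mul_left_right _
    have h3 := (hac.pow_right (n := 3)).dvd_of_dvd_mul_right hd
    have h4 : (9:ℤ) ≤ 9^l := le_self_pow₀ (by norm_num) (by omega)
    have := Int.le_of_dvd (by linarith) h3
    linarith
  have hr : l % 3 = 0 ∨ l % 3 = 1 ∨ l % 3 = 2 := by omega
  rcases hr with hr | hr | hr
  · exfalso
    obtain ⟨j, rfl⟩ : ∃ j, l = 3 * j := ⟨l/3, by omega⟩
    have := fermatLastTheoremThree
    rw [fermatLastTheoremFor_iff_int] at this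
    apply this a (9^j*c) p ha.ne' (by positivity) hp.ne'
    rw [h2]; ring
  · obtain ⟨j, rfl⟩ : ∃ j, l = 3 * j + 1 := ⟨l/3, by omega⟩
    have hq1 : p^3 + (-a)^3 = 9 * (9^j*c)^3 := by rw [h2]; ring
    have hg := grow9 (2*j) p (-a) (9^j*c) ((by rw [pow_mul]; norm_num)) hq1 hcop.symm.neg_right (by positivity)
    obtain ⟨A, rfl⟩ := Int.eq_ofNat_of_zero_le ha.le
    obtain ⟨P, rfl⟩ := Int.eq_ofNat_of_zero_le hp.le
    obtain ⟨D, rfl⟩ := Int.eq_ofNat_of_zero_le hc.le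
    rw [abs_of_pos (by positivity)] at hg
    have hA : 0 < A := by exact_mod_cast ha
    have hD : 0 < D := by exact_mod_cast hc
    have hal' : A < 9^(3*j+1) := by exact_mod_cast hal
    have hg' : 2^(7^(2*j)-1) ≤ 9^j * D := by exact_mod_cast hg
    have h2' : P^3 = 9 * (9^j*D)^3 + A^3 := by
      have : (P:ℤ)^3 = 9*(9^j*D)^3 + A^3 := by linear_combination hq1
      exact_mod_cast this
    have h1' : P = 9^κ*A + D := by exact_mod_cast h1
    clear hg hal hq1 h1 h2 hcop ha hc hp
    have hq : 9^j*D ≤ W := by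
      by_cases hcase : A^30 ≤ 9^j*D
      · exact (hQ0 _ A P hA h2' hcase).trans hW1
      · push Not at hcase
        have hlt : 9^j*D < 9^((3*j+1)*30) := by
          rw [pow_mul]; exact hcase.trans (Nat.pow_lt_pow_left hal' (by norm_num))
        have hj : j ≤ 1 := by
          by_contra hj
          push Not at hj
          have e1 : 9^((3*j+1)*30) ≤ 2^(7^(2*j)-1) := by
            have e2 : 120*(3*j+1) + 1 ≤ 49^j := by
              clear * - hj
              induction j, hj using Nat.le_induction with
              | base => norm_num
              | succ n hn ih => rw [pow_succ]; omega
            calc 9^((3*j+1)*30) ≤ (2^4)^((3*j+1)*30) := Nat.pow_le_pow_left (by norm_num) _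
              _ = 2^(120*(3*j+1)) := by rw [← pow_mul]; congr 1; ring
              _ ≤ _ := by
                apply Nat.pow_le_pow_right (by norm_num)
                rw [pow_mul]; norm_num; omega
          omega
        have hh : 9^((3*j+1)*30) ≤ 9^120 := Nat.pow_le_pow_right (by norm_num) (by omega)
        exact hlt.le.trans (hh.trans hW2)
    have hjQ : j ≤ W := by
      have e1 : j < 9^j := Nat.lt_pow_self (by norm_num)
      have e2 : 9^j ≤ 9^j*D := Nat.le_mul_of_pos_right _ hD
      omega
    have hPle : P ≤ 9^(3*W+1) + 9*W := by
      have e0 : 9^(3*j+1) ≤ 9^(3*W+1) := Nat.pow_le_pow_right (by norm_num) (by omega)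
      have e1 : P^3 ≤ (9^(3*W+1) + 9*W)^3 := by
        rw [h2']
        generalize 9^(3*W+1) = T at *
        have e3 : A ≤ T := by omega
        generalize 9^j*D = q at *
        have e4 : q^3 ≤ W^3 := Nat.pow_le_pow_left hq 3
        have e5 : A^3 ≤ T^3 := Nat.pow_le_pow_left e3 3
        have e6 : (T+9*W)^3 = T^3 + 9*W^3 + (720 * W^3 + 27*T^2*W+243*T*W^2) := by ring
        rw [e6]
        have : 0 ≤ 720 * W^3 + 27*T^2*W+243*T*W^2 := Nat.zero_le _
        linarith
      exact (Nat.pow_le_pow_iff_left (by norm_num)).mp e1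
    have e1 : κ < 9^κ := Nat.lt_pow_self (by norm_num)
    have e2 : 9^κ ≤ 9^κ*A := Nat.le_mul_of_pos_right _ hA
    omega
  · exfalso
    obtain ⟨j, rfl⟩ : ∃ j, l = 3 * j + 2 := ⟨l/3, by omega⟩
    have := no3 _ p (-a) (3*9^j*c) le_rfl (by rw [h2]; ring) hcop.symm.neg_right
    have : 0 < 3*9^j*c := by positivity
    omega

lemma core2 (Q0 : ℕ) (hQ0 : ∀ q A p : ℕ, 0 < A → p^3 = 9*q^3+A^3 → A^30 ≤ q → q ≤ Q0)
    (W : ℕ) (hW1 : Q0 ≤ W) (hW2 : 9^120 ≤ W)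
    (l κ : ℕ) (hκ : 0 < κ) (hl : 0 < l) (a b c : ℤ) (ha : 0 < a)
    (h1 : 9^κ * a + b + c = 0) (h2 : a^3 + b^3 + 9^l*c^3 = 0) (hcop : IsCoprime a b) :
    l + κ ≤ 3*W+1 + (9^(3*W+1) + 9 * W) := by
  have hk9 : (9:ℤ) ≤ 9^κ := le_self_pow₀ (by norm_num) (by omega)
  have hl9 : (9:ℤ) ≤ 9^l := le_self_pow₀ (by norm_num) (by omega)
  have hc : 0 < c := by
    by_contra hc
    push Not at hc
    obtain ⟨D, rfl⟩ : ∃ D, c = -D := ⟨-c, by ring⟩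
    have hD : 0 ≤ D := by linarith
    have hb : b = D - 9^κ*a := by linarith
    subst hb
    generalize (9:ℤ)^κ = T at *
    generalize (9:ℤ)^l = U at *
    have mono : ∀ {x y : ℤ}, x ≤ y → x^3 ≤ y^3 := fun {x y} h => (Odd.strictMono_pow (by decide : Odd 3)).monotone h
    have hUD : 9 * D^3 ≤ U * D^3 := mul_le_mul_of_nonneg_right hl9 (by positivity)
    have hTa : 9 * a ≤ T * a := mul_le_mul_of_nonneg_right hk9 ha.le
    have ha3 : 0 < a^3 := by positivity
    have hD3 : 0 ≤ D^3 := by positivity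
    rcases le_total D (T*a) with h | h
    · have e1 : (D - T*a)^3 ≤ 0 := by
        have := mono (show D - T*a ≤ 0 by linarith); simpa using this
      have e2 : D ≤ a := by
        by_contra e; push Not at e
        have := mono e.le
        linarith [show (-D)^3 = -D^3 by ring, show U * (-D)^3 = -(U*D^3) by ring]
      have e3 := mono (show D - T*a ≤ -(8*a) by linarith)
      linarith [show U * (-D)^3 = -(U*D^3) by ring, show (-(8*a))^3 = -(512 * a^3) by ring]
    · have e1 := mono (show D - T*a ≤ D by linarith)
      have e2 := mono (show a ≤ D by linarith)
      linarith [show U * (-D)^3 = -(U*D^3) by ring]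
  exact coreBound Q0 hQ0 W hW1 hW2 l κ hκ hl a c (-b) ha hc (by linarith) (by linear_combination -h2) hcop.neg_right

theorem ratBound (Q0 : ℕ) (hQ0 : ∀ q A p : ℕ, 0 < A → p^3 = 9*q^3+A^3 → A^30 ≤ q → q ≤ Q0) :
    ∃ N : ℕ, ∀ m l : ℕ, 0 < l → l < m → ∀ a b c : ℤ, a ≠ 0 → b ≠ 0 → c ≠ 0 →
      3^m*a+3^l*b+c = 0 → 3^m*a^3+3^l*b^3+c^3 = 0 → m ≤ N := by
  obtain ⟨W, hW1, hW2⟩ : ∃ W : ℕ, Q0 ≤ W ∧ 9^120 ≤ W := ⟨max Q0 (9^120), le_max_left _ _, le_max_right _ _⟩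
  refine ⟨3 * (3*W+1 + (9^(3*W+1) + 9 * W)), ?_⟩
  intro m l hl hlm a b c ha hb hc h1 h2
  obtain ⟨α, a, rfl, ha3⟩ := strip3 a ha
  obtain ⟨β, b, rfl, hb3⟩ := strip3 b hb
  obtain ⟨γ, c, rfl, hc3⟩ := strip3 c hc
  have h3p : ∀ x : ℤ, ¬ 3 ∣ x → ¬ 3 ∣ x^3 := fun x hx h => hx (Int.prime_three.dvd_of_dvd_pow h)
  have u1 := val3 (m+α) (l+β) γ a b c ha3 (by rw [← h1]; ring)
  have u2 := val3 (l+β) (m+α) γ b a c hb3 (by rw [← h1]; ring)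
  have u3 := val3 γ (m+α) (l+β) c a b hc3 (by rw [← h1]; ring)
  have v1 := val3 (m+3*α) (l+3*β) (3*γ) (a^3) (b^3) (c^3) (h3p _ ha3) (by rw [← h2]; ring)
  have v2 := val3 (l+3*β) (m+3*α) (3*γ) (b^3) (a^3) (c^3) (h3p _ hb3) (by rw [← h2]; ring)
  have v3 := val3 (3*γ) (m+3*α) (l+3*β) (c^3) (a^3) (b^3) (h3p _ hc3) (by rw [← h2]; ring)
  obtain ⟨κ, hκ, rfl, rfl, rfl⟩ : ∃ κ, 0 < κ ∧ m = l + 3*κ ∧ β = α + κ ∧ γ = l + α + κ := by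
    refine ⟨(m-l)/3, ?_, ?_, ?_, ?_⟩ <;> omega
  have h1' : 9^κ*a+b+c = 0 := by
    have : (3:ℤ)^(l+α+κ) * (9^κ*a+b+c) = 0 := by
      rw [show (9:ℤ)^κ = (3^κ)^2 by rw [← pow_mul, mul_comm, pow_mul]; norm_num, ← h1]; ring
    exact (mul_eq_zero.mp this).resolve_left (by positivity)
  have h2' : a^3+b^3+9^l*c^3 = 0 := by
    have : (3:ℤ)^(l+3*α+3*κ) * (a^3+b^3+9^l*c^3) = 0 := by
      rw [show (9:ℤ)^l = (3^l)^2 by rw [← pow_mul, mul_comm, pow_mul]; norm_num, ← h2]; ring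
    exact (mul_eq_zero.mp this).resolve_left (by positivity)
  have ha0 : a ≠ 0 := by rintro rfl; simp at ha3
  obtain ⟨g, a', b', hg, hcop, ha', hb'⟩ := Int.exists_gcd_one' (show 0 < Int.gcd a b from Int.gcd_pos_of_ne_zero_left _ ha0)
  have hg0 : (g:ℤ) ≠ 0 := by exact_mod_cast hg.ne'
  have hc' : c = (-9^κ*a'-b')*g := by linear_combination h1' - 9^κ * ha' - hb'
  have h1'' : 9^κ*a'+b'+(-9^κ*a'-b') = 0 := by ring
  generalize (-9^κ*a'-b') = c' at *
  have h2'' : a'^3+b'^3+9^l*c'^3 = 0 := by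
    have : (g:ℤ)^3 * (a'^3+b'^3+9^l*c'^3) = 0 := by rw [← h2', ha', hb', hc']; ring
    exact (mul_eq_zero.mp this).resolve_left (by positivity)
  have hcop' : IsCoprime a' b' := Int.isCoprime_iff_gcd_eq_one.mpr hcop
  have ha'0 : a' ≠ 0 := by rintro rfl; simp at ha'; exact ha0 ha'
  have hfin : l + κ ≤ 3*W+1 + (9^(3*W+1) + 9 * W) := by
    rcases lt_or_gt_of_ne ha'0 with h | h
    · exact core2 Q0 hQ0 W hW1 hW2 l κ hκ hl (-a') (-b') (-c') (by linarith) (by linear_combination -h1'') (by linear_combination -h2'')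
        hcop'.neg_left.neg_right
    · exact core2 Q0 hQ0 W hW1 hW2 l κ hκ hl a' b' c' h h1'' h2'' hcop'
  generalize 3*W+1 + (9^(3*W+1) + 9 * W) = W' at *
  omega
end EisX


namespace FldX
open scoped IntermediateField.algebraAdjoinAdjoin in
lemma finAlgClosure (k M : Type*) [Field k] [Field M] [Algebra k M] [Algebra.EssFiniteType k M] :
    FiniteDimensional k (algebraicClosure k M) := by
  obtain ⟨s, hs⟩ := IntermediateField.fg_top k M
  have h0 : Algebra.IsAlgebraic (Algebra.adjoin k (s : Set M)) M := by
    rw [← IntermediateField.isAlgebraic_adjoin_iff_top, hs, Algebra.isAlgebraic_iff_isIntegral]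
    exact Algebra.isIntegral_of_surjective IntermediateField.topEquiv.surjective
  obtain ⟨t, hts, ht⟩ := exists_isTranscendenceBasis_subset (R := k) (s : Set M)
  have h1 : Algebra.IsAlgebraic (IntermediateField.adjoin k t) M := by
    convert! ht.isAlgebraic_field <;> simp
  have h2 : Module.Finite (IntermediateField.adjoin k t) M := by
    have : Algebra.EssFiniteType (IntermediateField.adjoin k t) M := Algebra.EssFiniteType.of_comp k _ M
    exact Algebra.finite_of_essFiniteType_of_isAlgebraic
  let b := Module.Basis.ofVectorSpace k (algebraicClosure k M)
  have hli : LinearIndependent (Algebra.adjoin k t) (fun i => (b i : M)) := by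
    have hind : AlgebraicIndependent (algebraicClosure k M) ((↑) : t → M) := ht.1.algebraicClosure
    rw [linearIndependent_iff']
    intro u g hg i hi
    have hsurj : ∀ x : Algebra.adjoin k t, ∃ p : MvPolynomial t k, MvPolynomial.aeval ((↑) : t → M) p = x := by
      intro x
      have h9 := x.2
      have h10 : (x:M) ∈ (MvPolynomial.aeval ((↑) : t → M) : MvPolynomial t k →ₐ[k] M).range := by
        rw [← Algebra.adjoin_eq_range]; exact h9
      exact h10
    choose p hp using fun i => hsurj (g i)
    have h3 : MvPolynomial.aeval ((↑) : t → M) (∑ i ∈ u, MvPolynomial.C (b i) * (p i).map (algebraMap k (algebraicClosure k M))) = 0 := by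
      rw [map_sum, ← hg]
      refine Finset.sum_congr rfl fun i _ => ?_
      rw [map_mul, MvPolynomial.aeval_C, MvPolynomial.aeval_map_algebraMap, hp]
      rw [Algebra.smul_def, mul_comm]; rfl
    have h4 := hind.eq_zero_of_aeval_eq_zero _ h3
    have h5 : p i = 0 := by
      ext d
      have h6 := congrArg (MvPolynomial.coeff d) h4
      simp only [MvPolynomial.coeff_sum, MvPolynomial.coeff_C_mul, MvPolynomial.coeff_map, MvPolynomial.coeff_zero] at h6
      have h7 := linearIndependent_iff'.mp b.linearIndependent u (fun i => MvPolynomial.coeff d (p i)) (by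
        rw [← h6]; refine Finset.sum_congr rfl fun i _ => ?_; rw [Algebra.smul_def, mul_comm])
      simpa using h7 i hi
    have h8 := hp i
    rw [h5, map_zero] at h8
    exact Subtype.ext h8.symm
  have hli2 := (LinearIndependent.iff_fractionRing (Algebra.adjoin k t) (IntermediateField.adjoin k t)).mp hli
  have hfin := hli2.finite
  exact Module.Finite.of_basis b
end FldX


namespace FldX
lemma sqfree_eq (a b c : ℕ) (ha : Squarefree a) (hb : Squarefree b) (h : a * b = c^2) : a = b := by
  have key : ∀ a b c : ℕ, Squarefree a → a * b = c^2 → a ∣ b := by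
    intro a b c ha h
    have h1 : a ∣ c := (ha.dvd_pow_iff_dvd (n := 2) (by norm_num)).mp ⟨b, h.symm⟩
    obtain ⟨e, rfl⟩ := h1
    refine ⟨e^2, ?_⟩
    apply Nat.eq_of_mul_eq_mul_left (Nat.pos_of_ne_zero ha.ne_zero)
    rw [h]; ring
  exact Nat.dvd_antisymm (key a b c ha h) (key b a c hb (by rw [mul_comm]; exact h))

lemma sqfreeFinite (N : Type*) [Field N] [Algebra ℚ N] [FiniteDimensional ℚ N] [IsGalois ℚ N] :
    {d : ℕ | Squarefree d ∧ ∃ s : N, s^2 = algebraMap ℚ N (-3*d)}.Finite := by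
  set T := {d : ℕ | Squarefree d ∧ ∃ s : N, s^2 = algebraMap ℚ N (-3*d)} with hT
  choose s hs using fun d : T => d.2.2
  have hs0 : ∀ d, s d ≠ 0 := by
    intro d h0
    have h1 := hs d
    rw [h0] at h1
    have h2 : (-3 * ((d:ℕ):ℚ)) = 0 := by
      apply (algebraMap ℚ N).injective; rw [← h1]; simp
    have := d.2.1.ne_zero
    simp at h2; exact this h2
  have hinj : Function.Injective (fun d : T => fun σ : N ≃ₐ[ℚ] N => (σ (s d) = s d : Prop)) := by
    intro d d' hdd
    have hpm : ∀ (d : T) (σ : N ≃ₐ[ℚ] N), σ (s d) = s d ∨ σ (s d) = - s d := by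
      intro d σ
      apply sq_eq_sq_iff_eq_or_eq_neg.mp
      rw [← map_pow, hs, AlgEquiv.commutes]
    have hfix : ∀ σ : N ≃ₐ[ℚ] N, σ (s d * s d') = s d * s d' := by
      intro σ
      have h1 : (σ (s d) = s d) = (σ (s d') = s d') := congrFun hdd σ
      rw [map_mul]
      by_cases h : σ (s d) = s d
      · rw [h, h1.mp h]
      · rw [(hpm d σ).resolve_left h, (hpm d' σ).resolve_left (fun h' => h (h1.mpr h'))]; ring
    obtain ⟨r, hr⟩ := (IsGalois.mem_range_algebraMap_iff_fixed (F := ℚ) (s d * s d')).mpr hfix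
    have h2 : r^2 = 9 * ((d:ℕ):ℚ) * ((d':ℕ):ℚ) := by
      apply (algebraMap ℚ N).injective
      rw [map_pow, hr, mul_pow, hs, hs, ← map_mul]; congr 1; ring
    have h3 : IsSquare ((((d:ℕ) * (d':ℕ) : ℕ)):ℚ) := ⟨r/3, by push_cast; linear_combination -h2/9⟩
    rw [Rat.isSquare_natCast_iff] at h3
    obtain ⟨c, hc⟩ := h3
    exact Subtype.ext (sqfree_eq _ _ c d.2.1 d'.2.1 (by rw [hc, pow_two]))
  have : Finite T := Finite.of_injective _ hinj
  exact Set.toFinite T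

lemma sqfree_part (P Q d z : ℕ) (hP : 0 < P) (hQ : 0 < Q) (hc : Nat.Coprime P Q) (hd : Squarefree d)
    (h : P * Q = d * z^2) : ∃ d₁ z₁ : ℕ, d₁ ≤ d ∧ P = d₁ * z₁^2 := by
  obtain ⟨a, b, hab, ha⟩ := Nat.sq_mul_squarefree P
  obtain ⟨a', b', hab', ha'⟩ := Nat.sq_mul_squarefree Q
  have hcop : Nat.Coprime a a' := by
    refine Nat.Coprime.coprime_dvd_left ?_ (Nat.Coprime.coprime_dvd_right ?_ hc)
    · exact ⟨b^2, by rw [← hab]; ring⟩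
    · exact ⟨b'^2, by rw [← hab']; ring⟩
  have hsq : Squarefree (a*a') := (Nat.squarefree_mul hcop).mpr ⟨ha, ha'⟩
  have hbb : b * b' ≠ 0 := by
    intro h0
    rcases Nat.mul_eq_zero.mp h0 with h0 | h0
    · rw [h0] at hab; simp at hab; omega
    · rw [h0] at hab'; simp at hab'; omega
  have e1 : (a*a') * (b*b')^2 = d * z^2 := by rw [← h, ← hab, ← hab']; ring
  have e2 : ((a*a') * d) * (b*b')^2 = (d*z)^2 := by linear_combination d * e1
  have e3 : b*b' ∣ d*z := (Nat.pow_dvd_pow_iff (by norm_num : 2 ≠ 0)).mp ⟨a*a'*d, by rw [← e2]; ring⟩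
  obtain ⟨f, hf⟩ := e3
  have e4 : a*a'*d = f^2 := by
    apply Nat.eq_of_mul_eq_mul_right (pow_pos (Nat.pos_of_ne_zero hbb) 2)
    rw [e2, hf]; ring
  have e5 := sqfree_eq _ _ f hsq hd e4
  refine ⟨a, b, ?_, by rw [← hab]; ring⟩
  rw [← e5]; exact Nat.le_mul_of_pos_right _ (Nat.pos_of_ne_zero ha'.ne_zero)

lemma not3_of (x y : ℤ) (m l : ℕ) (hm : 0 < m) (hl : 0 < l) (u v w : ℤ) (hw : w = 1 ∨ w = -1)
    (hx : x = u*3^m + v*3^l + w) : IsCoprime x (3^y.natAbs) := by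
  apply IsCoprime.pow_right
  obtain ⟨i, rfl⟩ := Nat.exists_eq_add_of_lt hm
  obtain ⟨j, rfl⟩ := Nat.exists_eq_add_of_lt hl
  rw [hx]
  refine ⟨w, -w * (u*3^i+v*3^j), ?_⟩
  rcases hw with rfl | rfl <;> ring

lemma boundSeq (P : ℕ → ℕ → Prop) (h : ∀ d, ∃ c, P d c) (hmono : ∀ d c c', c ≤ c' → P d c → P d c') (B : ℕ) :
    ∃ c, ∀ d ≤ B, P d c := by
  choose f hf using h
  refine ⟨∑ d ∈ Finset.range (B+1), f d, fun d hd => hmono _ _ _ ?_ (hf d)⟩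
  exact Finset.single_le_sum (f := f) (fun _ _ => Nat.zero_le _) (Finset.mem_range.mpr (by omega))

theorem irrBound
    (hq : ∀ d par : ℕ, ∃ M0 : ℕ, ∀ m k z : ℕ, m % 2 = par → 0 < k → 3^m + k = d * z^2 → k^20 ≤ 3^m → m ≤ M0)
    (hp : ∀ d : ℕ, ∃ c : ℕ, ∀ m l z : ℕ, l ≤ m → (3^m+3^l)^2 = d*z^2+1 → l ≤ c ∨ 27 * l ≤ m + 82)
    (B : ℕ) : ∃ N0 : ℕ, ∀ m l : ℕ, 0 < l → l < m → ∀ d z : ℕ, Squarefree d → d ≤ B →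
      ((3^m+3^l+1)*(3^m+3^l-1)*(3^m-3^l+1)*(3^m-3^l-1) : ℤ) = d * z^2 → m ≤ N0 := by
  obtain ⟨M1, hM1⟩ := boundSeq (fun d M0 => ∀ m k z : ℕ, m % 2 = 0 → 0 < k → 3^m + k = d * z^2 → k^20 ≤ 3^m → m ≤ M0)
    (fun d => hq d 0) (fun d c c' hcc h m k z h1 h2 h3 h4 => (h m k z h1 h2 h3 h4).trans hcc) B
  obtain ⟨M2, hM2⟩ := boundSeq (fun d M0 => ∀ m k z : ℕ, m % 2 = 1 → 0 < k → 3^m + k = d * z^2 → k^20 ≤ 3^m → m ≤ M0)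
    (fun d => hq d 1) (fun d c c' hcc h m k z h1 h2 h3 h4 => (h m k z h1 h2 h3 h4).trans hcc) B
  obtain ⟨C, hC⟩ := boundSeq (fun d c => ∀ m l z : ℕ, l ≤ m → (3^m+3^l)^2 = d*z^2+1 → l ≤ c ∨ 27 * l ≤ m + 82)
    hp (fun d c c' hcc h m l z h1 h2 => (h m l z h1 h2).imp (fun h => h.trans hcc) id) B
  refine ⟨20*(C+1) + 312 + M1 + M2, ?_⟩
  intro m l hl hlm d z hd hdB h
  have hXY : (3:ℤ)^l * 3 ≤ 3^m := by
    rw [← pow_succ]; exact pow_le_pow_right₀ (by norm_num) hlm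
  have hY : (3:ℤ) ≤ 3^l := le_self_pow₀ (by norm_num) (by omega)
  -- coprimality
  have c2 : ∀ x u v w : ℤ, u = 1 → (v = 1 ∨ v = -1) → (w = 1 ∨ w = -1) → x = u*3^m+v*3^l+w → 
      IsCoprime x 2 ∧ IsCoprime x (3^m) ∧ IsCoprime x (3^l) := by
    intro x u v w hu hv hw hx
    refine ⟨?_, ?_, ?_⟩
    · have o1 : Odd ((3:ℤ)^m) := Odd.pow (by decide)
      have o2 : Odd ((3:ℤ)^l) := Odd.pow (by decide)
      have : Odd x := by
        subst hu hx
        obtain ⟨i, hi⟩ := o1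
        obtain ⟨j, hj⟩ := o2
        rw [hi, hj]
        rcases hv with rfl | rfl <;> rcases hw with rfl | rfl
        · exact ⟨i+j+1, by ring⟩
        · exact ⟨i+j, by ring⟩
        · exact ⟨i-j, by ring⟩
        · exact ⟨i-j-1, by ring⟩
      rw [isCoprime_comm, Int.prime_two.coprime_iff_not_dvd]
      rw [← even_iff_two_dvd]; exact Int.not_even_iff_odd.mpr this
    · simpa using not3_of x m m l (by omega) hl u v w hw hx
    · simpa using not3_of x l m l (by omega) hl u v w hw hx
  obtain ⟨X, hX⟩ : ∃ X : ℤ, X = 3^m := ⟨_, rfl⟩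
  obtain ⟨Y, hYd⟩ : ∃ Y : ℤ, Y = 3^l := ⟨_, rfl⟩
  rw [← hX, ← hYd] at h hXY
  rw [← hYd] at hY
  simp only [← hX, ← hYd] at c2
  have cp : ∀ x y t : ℤ, IsCoprime x t → (∃ k, y = t + x * k) → IsCoprime x y := by
    rintro x y t h ⟨k, rfl⟩; exact h.add_mul_left_right _
  have q1 := c2 (X+Y+1) 1 1 1 rfl (Or.inl rfl) (Or.inl rfl) (by ring)
  have q2 := c2 (X+Y-1) 1 1 (-1) rfl (Or.inl rfl) (Or.inr rfl) (by ring)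
  have c12 : IsCoprime (X+Y+1) (X+Y-1) := cp _ _ (-2) q1.1.neg_right ⟨1, by ring⟩
  have c13 : IsCoprime (X+Y+1) (X-Y+1) := cp _ _ (-(2*Y)) (q1.1.mul_right q1.2.2).neg_right ⟨1, by ring⟩
  have c14 : IsCoprime (X+Y+1) (X-Y-1) := cp _ _ (2*X) (q1.1.mul_right q1.2.1) ⟨-1, by ring⟩
  have c23 : IsCoprime (X+Y-1) (X-Y+1) := cp _ _ (2*X) (q2.1.mul_right q2.2.1) ⟨-1, by ring⟩
  have c24 : IsCoprime (X+Y-1) (X-Y-1) := cp _ _ (-(2*Y)) (q2.1.mul_right q2.2.2).neg_right ⟨1, by ring⟩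
  have split : ∀ P Q : ℤ, 0 < P → 0 < Q → IsCoprime P Q → P * Q = d * z^2 → ∃ d₁ z₁ : ℕ, d₁ ≤ B ∧ P = d₁ * z₁^2 := by
    intro P Q hP hQ hc hPQ
    obtain ⟨P, rfl⟩ := Int.eq_ofNat_of_zero_le hP.le
    obtain ⟨Q, rfl⟩ := Int.eq_ofNat_of_zero_le hQ.le
    obtain ⟨d₁, z₁, h1, h2⟩ := sqfree_part P Q d z (by exact_mod_cast hP) (by exact_mod_cast hQ)
      (Nat.isCoprime_iff_coprime.mp hc) hd (by exact_mod_cast hPQ)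
    exact ⟨d₁, z₁, h1.trans hdB, by exact_mod_cast h2⟩
  have pos3 : 0 < X-Y+1 := by linarith
  have pos4 : 0 < X-Y-1 := by linarith
  have pos1 : 0 < X+Y+1 := by linarith
  have pos2 : 0 < X+Y-1 := by linarith
  obtain ⟨d₁, z₁, hd₁, hz₁⟩ := split (X+Y+1) ((X+Y-1)*(X-Y+1)*(X-Y-1)) pos1 (by positivity)
    ((c12.mul_right c13).mul_right c14) (by rw [← h]; ring)
  obtain ⟨d₂, z₂, hd₂, hz₂⟩ := split ((X+Y+1)*(X+Y-1)) ((X-Y+1)*(X-Y-1)) (by positivity) (by positivity)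
    ((c13.mul_right c14).mul_left (c23.mul_right c24)) (by rw [← h]; ring)
  have g1 : 3^m + (3^l+1) = d₁ * z₁^2 := by
    have : (3:ℤ)^m + (3^l+1) = d₁ * z₁^2 := by rw [← hX, ← hYd, ← hz₁]; ring
    exact_mod_cast this
  have g2 : (3^m+3^l)^2 = d₂*z₂^2+1 := by
    have : ((3:ℤ)^m+3^l)^2 = d₂*z₂^2+1 := by rw [← hX, ← hYd, ← hz₂]; ring
    exact_mod_cast this
  by_contra hcon
  have g3 : 20*(l+1) ≤ m := by
    rcases hC d₂ hd₂ m l z₂ hlm.le g2 with h5 | h5 <;> omega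
  have g4 : (3^l+1)^20 ≤ 3^m := by
    have : 3^l+1 ≤ 3^(l+1) := by
      have : 1 ≤ 3^l := Nat.one_le_pow _ _ (by norm_num)
      rw [pow_succ]; omega
    calc (3^l+1)^20 ≤ (3^(l+1))^20 := Nat.pow_le_pow_left this _
      _ = 3^(20*(l+1)) := by rw [← pow_mul]; congr 1; ring
      _ ≤ 3^m := Nat.pow_le_pow_right (by norm_num) g3
  rcases Nat.mod_two_eq_zero_or_one m with h5 | h5
  · have := hM1 d₁ hd₁ m (3^l+1) z₁ h5 (by positivity) g1 g4; omega
  · have := hM2 d₁ hd₁ m (3^l+1) z₁ h5 (by positivity) g1 g4; omega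
end FldX


namespace FldX
lemma nz_aux {M : Type*} [Field M] (X Y Z a b c : M) (hX : X ≠ 0) (hY : Y ≠ 0) (hXY : X^2 ≠ Y^2)
    (h1 : X*a + Y*b + Z*c = 0) (h3 : X*a^3+Y*b^3+Z*c^3 = 0) (hc : c = 0) : a = 0 ∧ b = 0 := by
  subst hc
  by_cases hb : b = 0
  · subst hb
    refine ⟨?_, rfl⟩
    simp at h1; tauto
  · exfalso
    have e1 : X*a = -(Y*b) := by linear_combination h1
    have e2 : X^2 * (X*a^3) = -(Y*b)^3 := by rw [show X^2*(X*a^3) = (X*a)^3 by ring, e1]; ring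
    have e3 : X*a^3 = -(Y*b^3) := by linear_combination h3
    rw [e3] at e2
    apply hXY
    have : Y*b^3 ≠ 0 := mul_ne_zero hY (pow_ne_zero 3 hb)
    apply mul_right_cancel₀ this
    linear_combination -e2

lemma nz_all {M : Type*} [Field M] [CharZero M] (m l : ℕ) (hl : 0 < l) (hlm : l < m) (a b c : M)
    (h0 : ¬ (a = 0 ∧ b = 0 ∧ c = 0))
    (h1 : 3^m*a + 3^l*b + c = 0) (h3 : 3^m*a^3+3^l*b^3+c^3 = 0) : a ≠ 0 ∧ b ≠ 0 ∧ c ≠ 0 := by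
  have inj : ∀ i j : ℕ, i ≠ j → ((3:M)^i)^2 ≠ (3^j)^2 := by
    intro i j hij h
    have h' : ((3:ℕ)^i)^2 = (3^j)^2 := by exact_mod_cast h
    rw [← pow_mul, ← pow_mul] at h'
    have := Nat.pow_right_injective (le_refl 2 |>.trans (by norm_num : 2 ≤ 3)) h'
    omega
  have p : ∀ i : ℕ, (3:M)^i ≠ 0 := fun i => pow_ne_zero _ (by norm_num)
  refine ⟨?_, ?_, ?_⟩
  · intro h
    have := nz_aux (3^l) (3^0) (3^m) b c a (p _) (p _) (inj _ _ (by omega)) (by linear_combination h1) (by linear_combination h3) h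
    tauto
  · intro h
    have := nz_aux (3^m) (3^0) (3^l) a c b (p _) (p _) (inj _ _ (by omega)) (by linear_combination h1) (by linear_combination h3) h
    tauto
  · intro h
    have := nz_aux (3^m) (3^l) (3^0) a b c (p _) (p _) (inj _ _ (by omega)) (by linear_combination h1) (by linear_combination h3) h
    tauto

lemma rat_case (N : ℕ) (hN : ∀ m l : ℕ, 0 < l → l < m → ∀ a b c : ℤ, a ≠ 0 → b ≠ 0 → c ≠ 0 →
      3^m*a+3^l*b+c = 0 → 3^m*a^3+3^l*b^3+c^3 = 0 → m ≤ N)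
    (m l : ℕ) (hl : 0 < l) (hlm : l < m) (r : ℚ)
    (hr : (3^m - (3^m)^3)*r^3 + (-3*(3^m)^2*3^l)*r^2 + (-3*3^m*(3^l)^2)*r + (3^l-(3^l)^3) = 0) : m ≤ N := by
  obtain ⟨p, q, hq, rfl⟩ : ∃ p q : ℤ, q ≠ 0 ∧ r = p / q := ⟨r.num, r.den, by exact_mod_cast r.den_ne_zero, by exact_mod_cast (Rat.num_div_den r).symm⟩
  have hq' : (q:ℚ) ≠ 0 := by exact_mod_cast hq
  have e : (3:ℚ)^m*p^3+3^l*q^3+(-(3^m*p+3^l*q))^3 = 0 := by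
    field_simp at hr
    linear_combination hr
  have e0 : (3:ℚ)^m*p+3^l*q+(-(3^m*p+3^l*q)) = 0 := by ring
  obtain ⟨h1, h2, h3⟩ := nz_all m l hl hlm _ _ _ (by tauto) e0 e
  exact hN m l hl hlm p q (-(3^m*p+3^l*q)) (by exact_mod_cast h1) hq (by exact_mod_cast h3) (by ring) (by exact_mod_cast e)

lemma disc_case (N : Type*) [Field N] [Algebra ℚ N] [Normal ℚ N] (X Y : ℚ) (hX : X ≠ 0) (hY : Y ≠ 0)
    (hX1 : X - X^3 ≠ 0) (t : N)
    (hr : ∀ r : ℚ, (X-X^3)*r^3 + (-3*X^2*Y)*r^2 + (-3*X*Y^2)*r + (Y-Y^3) ≠ 0)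
    (ht : algebraMap ℚ N (X-X^3)*t^3 + algebraMap ℚ N (-3*X^2*Y)*t^2 + algebraMap ℚ N (-3*X*Y^2)*t + algebraMap ℚ N (Y-Y^3) = 0) :
    ∃ s : N, s^2 = algebraMap ℚ N (-3 * ((X+Y+1)*(X+Y-1)*(X-Y+1)*(X-Y-1))) := by
  set P : Cubic ℚ := Cubic.mk (X-X^3) (-3*X^2*Y) (-3*X*Y^2) (Y-Y^3) with hP
  have ha : P.a ≠ 0 := hX1
  have hdeg := Cubic.natDegree_of_a_ne_zero ha
  have hne : P.toPoly ≠ 0 := by intro h; rw [h] at hdeg; simp at hdeg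
  have hirr : Irreducible P.toPoly := by
    rw [Polynomial.irreducible_iff_roots_eq_zero_of_degree_le_three (by omega) (by omega)]
    rw [Multiset.eq_zero_iff_forall_notMem]
    intro r h
    rw [Polynomial.mem_roots hne] at h
    apply hr r
    simpa [Polynomial.IsRoot, Cubic.toPoly, hP] using h
  have hroot : Polynomial.aeval t P.toPoly = 0 := by
    simp only [Cubic.toPoly, hP, map_add, map_mul, map_pow, Polynomial.aeval_C, Polynomial.aeval_X]
    simpa only [map_mul, map_pow] using ht
  have hmin := minpoly.eq_of_irreducible hirr hroot
  have hsp := Normal.splits (F := ℚ) (K := N) inferInstance t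
  rw [← hmin] at hsp
  have hsp2 : (P.toPoly.map (algebraMap ℚ N)).Splits := by
    refine Polynomial.Splits.of_dvd hsp ?_ ?_
    · rw [hmin]; exact Polynomial.map_ne_zero (minpoly.ne_zero (Algebra.IsIntegral.isIntegral t))
    · exact Polynomial.map_dvd _ (Dvd.intro _ rfl)
  obtain ⟨x, y, z, h3⟩ := (Cubic.splits_iff_roots_eq_three ha).mp hsp2
  have hd := Cubic.discr_eq_prod_three_roots ha h3
  have hd2 : P.discr = (3*X*Y)^2 * (-3 * ((X+Y+1)*(X+Y-1)*(X-Y+1)*(X-Y-1))) := by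
    simp only [hP, Cubic.discr]; ring
  rw [hd2, map_mul, map_pow] at hd
  have hn : algebraMap ℚ N (3*X*Y) ≠ 0 := by
    rw [map_ne_zero]; positivity
  refine ⟨(algebraMap ℚ N P.a * algebraMap ℚ N P.a * (x - y) * (x - z) * (y - z)) / algebraMap ℚ N (3*X*Y), ?_⟩
  rw [div_pow, ← hd]
  field_simp

lemma galois_case (hq : ∀ d par : ℕ, ∃ M0 : ℕ, ∀ m k z : ℕ, m % 2 = par → 0 < k → 3^m + k = d * z^2 → k^20 ≤ 3^m → m ≤ M0)
    (hp : ∀ d : ℕ, ∃ c : ℕ, ∀ m l z : ℕ, l ≤ m → (3^m+3^l)^2 = d*z^2+1 → l ≤ c ∨ 27 * l ≤ m + 82)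
    (N0 : ℕ) (hN : ∀ m l : ℕ, 0 < l → l < m → ∀ a b c : ℤ, a ≠ 0 → b ≠ 0 → c ≠ 0 →
      3^m*a+3^l*b+c = 0 → 3^m*a^3+3^l*b^3+c^3 = 0 → m ≤ N0)
    (N : Type*) [Field N] [Algebra ℚ N] [FiniteDimensional ℚ N] [IsGalois ℚ N] :
    ∃ N1 : ℕ, ∀ m l : ℕ, 0 < l → l < m → ∀ t : N, 
    algebraMap ℚ N (3^m-(3^m)^3)*t^3 + algebraMap ℚ N (-3*(3^m)^2*3^l)*t^2 + algebraMap ℚ N (-3*3^m*(3^l)^2)*t + algebraMap ℚ N (3^l-(3^l)^3) = 0 → m ≤ N1 := by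
  obtain ⟨B, hB⟩ := (sqfreeFinite N).bddAbove
  obtain ⟨N2, hN2⟩ := irrBound hq hp B
  refine ⟨max N0 N2, ?_⟩
  intro m l hl hlm t ht
  by_cases hr : ∃ r : ℚ, (3^m - (3^m)^3)*r^3 + (-3*(3^m)^2*3^l)*r^2 + (-3*3^m*(3^l)^2)*r + (3^l-(3^l)^3) = 0
  · obtain ⟨r, hr⟩ := hr
    exact le_max_of_le_left (rat_case N0 hN m l hl hlm r hr)
  · push Not at hr
    apply le_max_of_le_right
    have hm3 : (3:ℤ) * 3^l ≤ 3^m := by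
      rw [← pow_succ']; exact pow_le_pow_right₀ (by norm_num) hlm
    have hl3 : (3:ℤ) ≤ 3^l := le_self_pow₀ (by norm_num) (by omega)
    have hX1 : (3:ℚ)^m - (3^m)^3 ≠ 0 := by
      have : (3:ℚ) < 3^m := by exact_mod_cast (by linarith : (3:ℤ) < 3^m)
      nlinarith [sq_nonneg ((3:ℚ)^m), mul_pos (show (0:ℚ) < 3^m by positivity) (show (0:ℚ) < 3^m by positivity)]
    obtain ⟨s, hs⟩ := disc_case N (3^m) (3^l) (by positivity) (by positivity) hX1 t hr ht
    have hpos : (0:ℤ) < (3^m+3^l+1)*(3^m+3^l-1)*(3^m-3^l+1)*(3^m-3^l-1) := by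
      apply mul_pos (mul_pos (mul_pos _ _) _) <;> linarith
    obtain ⟨D, hD⟩ := Int.eq_ofNat_of_zero_le hpos.le
    obtain ⟨d, z, hdz, hd⟩ := Nat.sq_mul_squarefree D
    have hz : z ≠ 0 := by
      rintro rfl
      rw [hD] at hpos
      simp at hdz
      simp [← hdz] at hpos
    have hDq : (((3^m+3^l+1)*(3^m+3^l-1)*(3^m-3^l+1)*(3^m-3^l-1) : ℚ)) = z^2 * d := by
      have : (((3^m+3^l+1)*(3^m+3^l-1)*(3^m-3^l+1)*(3^m-3^l-1) : ℤ)) = z^2 * d := by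
        rw [hD, ← hdz]; push_cast; ring
      exact_mod_cast this
    have hzN : algebraMap ℚ N z ≠ 0 := by rw [map_ne_zero]; exact_mod_cast hz
    have hdB : d ≤ B := by
      apply hB
      refine ⟨hd, s / algebraMap ℚ N z, ?_⟩
      rw [div_pow, hs, hDq, ← map_pow, ← map_div₀]
      congr 1
      have : (z:ℚ) ≠ 0 := by exact_mod_cast hz
      field_simp
    apply hN2 m l hl hlm d z hd hdB
    rw [hD, ← hdz]; push_cast; ring

lemma exNormal (k : Type) (M : Type) [Field k] [CharZero k] [Field M] [Algebra k M] [Algebra.EssFiniteType k M] :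
    ∃ (N : Type) (_ : Field N) (_ : Algebra k N) (_ : FiniteDimensional k N) (_ : IsGalois k N),
      ∀ t : M, IsAlgebraic k t → ∃ t' : N, ∀ p : Polynomial k, Polynomial.aeval t p = 0 → Polynomial.aeval t' p = 0 := by
  let K := algebraicClosure k M
  have hfin : FiniteDimensional k K := finAlgClosure k M
  let N := IntermediateField.normalClosure k K (AlgebraicClosure K)
  have i1 : Normal k N := normalClosure.normal k K (AlgebraicClosure K)
  refine ⟨N, inferInstance, inferInstance, normalClosure.is_finiteDimensional k K (AlgebraicClosure K), ⟨⟩, ?_⟩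
  intro t₀ halg
  let t : K := ⟨t₀, by rw [mem_algebraicClosure_iff]; exact halg⟩
  have h2 := (AlgHom.fieldRange_le_normalClosure (IsScalarTower.toAlgHom k K (AlgebraicClosure K)) ⟨t, rfl⟩)
  refine ⟨⟨_, h2⟩, ?_⟩
  intro p hroot
  have hK : Polynomial.aeval t p = 0 := by
    apply (algebraMap K M).injective
    rw [← Polynomial.aeval_algebraMap_apply, map_zero]; exact hroot
  apply (algebraMap N (AlgebraicClosure K)).injective
  rw [← Polynomial.aeval_algebraMap_apply, map_zero]
  change Polynomial.aeval (algebraMap K (AlgebraicClosure K) t) _ = 0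
  rw [Polynomial.aeval_algebraMap_apply, hK, map_zero]

lemma fieldBound (hq : ∀ d par : ℕ, ∃ M0 : ℕ, ∀ m k z : ℕ, m % 2 = par → 0 < k → 3^m + k = d * z^2 → k^20 ≤ 3^m → m ≤ M0)
    (hp : ∀ d : ℕ, ∃ c : ℕ, ∀ m l z : ℕ, l ≤ m → (3^m+3^l)^2 = d*z^2+1 → l ≤ c ∨ 27 * l ≤ m + 82)
    (N0 : ℕ) (hN : ∀ m l : ℕ, 0 < l → l < m → ∀ a b c : ℤ, a ≠ 0 → b ≠ 0 → c ≠ 0 →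
      3^m*a+3^l*b+c = 0 → 3^m*a^3+3^l*b^3+c^3 = 0 → m ≤ N0)
    (M : Type) [Field M] [Algebra ℚ M] [Algebra.EssFiniteType ℚ M] :
    ∃ N1 : ℕ, ∀ m l : ℕ, 0 < l → l < m → ∀ a b c : M, ¬ (a = 0 ∧ b = 0 ∧ c = 0) →
     3^m*a + 3^l*b + c = 0 → 3^m*a^3+3^l*b^3+c^3 = 0 → m ≤ N1 := by
  have : CharZero M := algebraRat.charZero M
  obtain ⟨N, _, _, _, _, hNt⟩ := exNormal ℚ M
  obtain ⟨N1, hN1⟩ := galois_case hq hp N0 hN N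
  refine ⟨N1, ?_⟩
  intro m l hl hlm a b c h0 h1 h3
  obtain ⟨ha, hb, hc⟩ := nz_all m l hl hlm a b c h0 h1 h3
  have ht : ∀ (A : Type) [Field A] [Algebra ℚ A] (t : A), (algebraMap ℚ A (3^m-(3^m)^3)*t^3 + algebraMap ℚ A (-3*(3^m)^2*3^l)*t^2 + algebraMap ℚ A (-3*3^m*(3^l)^2)*t + algebraMap ℚ A (3^l-(3^l)^3) = 0 ↔ 
     Polynomial.aeval t (Cubic.mk ((3:ℚ)^m-(3^m)^3) (-3*(3^m)^2*3^l) (-3*3^m*(3^l)^2) (3^l-(3^l)^3)).toPoly = 0) := by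
    intro A _ _ t
    simp only [Cubic.toPoly, map_add, Polynomial.aeval_C, Polynomial.aeval_X, map_mul, map_pow]
  have hX1 : (3:ℚ)^m - (3^m)^3 ≠ 0 := by
    have : (1:ℚ) < 3^m := one_lt_pow₀ (by norm_num) (by omega)
    nlinarith [sq_nonneg ((3:ℚ)^m), mul_pos (show (0:ℚ) < 3^m by positivity) (show (0:ℚ) < 3^m by positivity)]
  have hroot : Polynomial.aeval (a/b) (Cubic.mk ((3:ℚ)^m-(3^m)^3) (-3*(3^m)^2*3^l) (-3*3^m*(3^l)^2) (3^l-(3^l)^3)).toPoly = 0 := by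
    rw [← ht]
    have hc' : c = -(3^m*a+3^l*b) := by linear_combination h1
    rw [hc'] at h3
    simp only [map_sub, map_mul, map_pow, map_neg, map_ofNat]
    field_simp
    linear_combination h3
  have halg : IsAlgebraic ℚ (a/b) := ⟨_, by
    intro h
    have := Cubic.natDegree_of_a_ne_zero (P := (Cubic.mk ((3:ℚ)^m-(3^m)^3) (-3*(3^m)^2*3^l) (-3*3^m*(3^l)^2) (3^l-(3^l)^3))) hX1
    rw [h] at this; simp at this, hroot⟩
  obtain ⟨t', ht'⟩ := hNt (a/b) halg
  refine hN1 m l hl hlm t' ?_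
  rw [ht]
  exact ht' _ hroot
end FldX


namespace RedX
open MvPolynomial
lemma leadCoeffs_ord {K I J : Type*} [Field K] [Fintype J] (m : MonomialOrder I)
    (q : J → MvPolynomial I K) (hq : ∃ j, q j ≠ 0) (h1 : ∑ j, q j = 0) (h3 : ∑ j, q j ^ 3 = 0) :
    ∃ s : I →₀ ℕ, (∃ j, coeff s (q j) ≠ 0) ∧ ∑ j, coeff s (q j) = 0 ∧ ∑ j, (coeff s (q j))^3 = 0 := by
  classical
  obtain ⟨j, hj, hmax⟩ := Finset.exists_max_image (Finset.univ.filter fun j => q j ≠ 0) (fun j => m.toSyn (m.degree (q j)))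
    (by obtain ⟨j, hj⟩ := hq; exact ⟨j, by simpa using hj⟩)
  have hle : ∀ i, m.toSyn (m.degree (q i)) ≤ m.toSyn (m.degree (q j)) := by
    intro i
    by_cases hi : q i = 0
    · rw [hi, MonomialOrder.degree_zero, map_zero]; exact bot_le
    · exact hmax i (by simpa using hi)
  refine ⟨m.degree (q j), ⟨j, ?_⟩, ?_, ?_⟩
  · have : m.leadingCoeff (q j) ≠ 0 := by
      rw [MonomialOrder.leadingCoeff_ne_zero_iff]; simpa using hj
    exact this
  · rw [← coeff_sum, h1, coeff_zero]
  · have := congrArg (coeff (m.degree (q j) + m.degree (q j) + m.degree (q j))) h3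
    rw [coeff_sum, coeff_zero] at this
    rw [← this]
    refine Finset.sum_congr rfl fun i _ => ?_
    have e2 := MonomialOrder.coeff_mul_of_add_of_degree_le (hle i) (hle i)
    have hd2 : m.toSyn (m.degree (q i * q i)) ≤ m.toSyn (m.degree (q j) + m.degree (q j)) := by
      refine le_trans MonomialOrder.degree_mul_le ?_
      rw [map_add, map_add]; exact add_le_add (hle i) (hle i)
    rw [show q i ^ 3 = q i * q i * q i by ring, MonomialOrder.coeff_mul_of_add_of_degree_le hd2 (hle i), e2]
    ring

lemma leadCoeffs {K I J : Type*} [Field K] [Fintype I] [Fintype J]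
    (q : J → MvPolynomial I K) (hq : ∃ j, q j ≠ 0) (h1 : ∑ j, q j = 0) (h3 : ∑ j, q j ^ 3 = 0) :
    ∃ s : I →₀ ℕ, (∃ j, coeff s (q j) ≠ 0) ∧ ∑ j, coeff s (q j) = 0 ∧ ∑ j, (coeff s (q j))^3 = 0 := by
  let _ : LinearOrder I := LinearOrder.lift' (Fintype.equivFin I) (Equiv.injective _)
  exact leadCoeffs_ord (MonomialOrder.lex) q hq h1 h3

lemma coeff_diag {K I : Type*} [Field K] (u : I → K) (q : MvPolynomial I K) (s : I →₀ ℕ) :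
    coeff s (aeval (fun i => C (u i) * X i : I → MvPolynomial I K) q) = (s.prod fun i m => u i ^ m) * coeff s q := by
  classical
  induction q using MvPolynomial.induction_on' with
  | monomial t a =>
    rw [aeval_monomial]
    have : (t.prod fun i k => (C (u i) * X i : MvPolynomial I K)^k) = C (t.prod fun i m => u i ^ m) * monomial t 1 := by
      rw [monomial_eq, C_1, one_mul, Finsupp.prod, Finsupp.prod, Finsupp.prod, map_prod, ← Finset.prod_mul_distrib]
      refine Finset.prod_congr rfl fun i _ => ?_
      rw [mul_pow, map_pow]
    rw [this, algebraMap_eq, coeff_C_mul, coeff_C_mul, coeff_monomial, coeff_monomial]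
    split_ifs with h
    · subst h; ring
    · ring
  | add p q hp hq => rw [map_add, coeff_add, hp, hq, coeff_add]; ring

section core
variable {K : Type*} [Field K] (k : Fin 3 → ℕ) (ζ : AddChar (ZMod 3) K)

abbrev Idx : Type := Σ o : Fin 3, (Fin (k o) → ZMod 3)

def tr (h : ∀ o : Fin 3, Fin (k o) → ZMod 3) : Equiv.Perm (Idx k) :=
  Equiv.sigmaCongrRight fun o => Equiv.addRight (h o)

def four : MvPolynomial (Idx k) K →ₐ[K] MvPolynomial (Idx k) K :=
  aeval fun i => ∑ e : Fin (k i.1) → ZMod 3, C (ζ (e ⬝ᵥ i.2)) * X ⟨i.1, e⟩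

def fourInv : MvPolynomial (Idx k) K →ₐ[K] MvPolynomial (Idx k) K :=
  aeval fun i => C ((3^(k i.1))⁻¹) * ∑ g : Fin (k i.1) → ZMod 3, C (ζ (i.2 ⬝ᵥ (-g))) * X ⟨i.1, g⟩

lemma orth (hζ : ζ.IsPrimitive) (n : ℕ) (g : Fin n → ZMod 3) :
    ∑ e : Fin n → ZMod 3, ζ (e ⬝ᵥ g) = if g = 0 then (3:K)^n else 0 := by
  split_ifs with h
  · subst h; simp [ZMod.card]
  · let ψ : AddChar (Fin n → ZMod 3) K :=
      { toFun := fun e => ζ (e ⬝ᵥ g)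
        map_zero_eq_one' := by simp
        map_add_eq_mul' := fun a b => by rw [add_dotProduct, AddChar.map_add_eq_mul] }
    have : ψ ≠ 1 := by
      intro h1
      obtain ⟨t, ht⟩ := Function.ne_iff.mp h
      have hp := hζ ht
      apply hp
      ext x
      have := DFunLike.congr_fun h1 (Pi.single t x)
      change ζ (Pi.single t x ⬝ᵥ g) = 1 at this
      rw [single_dotProduct] at this
      simpa [mul_comm] using this
    exact AddChar.sum_eq_zero_of_ne_one this

lemma four_inv [CharZero K] (hζ : ζ.IsPrimitive) (p : MvPolynomial (Idx k) K) :
    fourInv k ζ (four k ζ p) = p := by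
  have : (fourInv k ζ).comp (four k ζ) = AlgHom.id K _ := by
    apply MvPolynomial.algHom_ext
    rintro ⟨o, g⟩
    simp only [AlgHom.comp_apply, four, aeval_X, map_sum, map_mul, algHom_C, AlgHom.id_apply]
    simp only [fourInv, aeval_X, algebraMap_eq]
    have e : ∀ e : Fin (k o) → ZMod 3, C (ζ (e ⬝ᵥ g)) * (C ((3^(k o))⁻¹) * ∑ g' : Fin (k o) → ZMod 3, C (ζ (e ⬝ᵥ (-g'))) * X (⟨o, g'⟩ : Idx k))
      = C ((3^(k o))⁻¹ : K) * ∑ g' : Fin (k o) → ZMod 3, C (ζ (e ⬝ᵥ (g - g'))) * X (⟨o, g'⟩ : Idx k) := by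
      intro e
      rw [mul_left_comm, Finset.mul_sum]
      congr 1
      refine Finset.sum_congr rfl fun g' _ => ?_
      rw [← mul_assoc, ← C_mul, ← AddChar.map_add_eq_mul, ← dotProduct_add, sub_eq_add_neg]
    rw [Finset.sum_congr rfl fun x _ => e x, ← Finset.mul_sum, Finset.sum_comm]
    have e2 : ∀ g' : Fin (k o) → ZMod 3, ∑ x : Fin (k o) → ZMod 3, C (ζ (x ⬝ᵥ (g - g'))) * X (⟨o, g'⟩ : Idx k) =
        if g = g' then C (3^(k o) : K) * X (⟨o, g'⟩ : Idx k) else 0 := by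
      intro g'
      rw [← Finset.sum_mul, ← map_sum, orth ζ hζ]
      simp only [sub_eq_zero]
      split_ifs
      · rfl
      · rw [C_0, zero_mul]
    rw [Finset.sum_congr rfl fun x _ => e2 x, Finset.sum_ite_eq]
    simp only [Finset.mem_univ, if_true]
    rw [← mul_assoc, ← C_mul, inv_mul_cancel₀ (pow_ne_zero _ (by norm_num)), C_1, one_mul]
  exact DFunLike.congr_fun this p

lemma four_tr (h : ∀ o : Fin 3, Fin (k o) → ZMod 3) (p : MvPolynomial (Idx k) K) :
    four k ζ (rename (tr k h) p) = aeval (fun i => C (ζ (i.2 ⬝ᵥ h i.1)) * X i : Idx k → MvPolynomial (Idx k) K) (four k ζ p) := by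
  have : (four k ζ).comp (rename (tr k h)) = (aeval (fun i => C (ζ (i.2 ⬝ᵥ h i.1)) * X i : Idx k → MvPolynomial (Idx k) K)).comp (four k ζ) := by
    apply MvPolynomial.algHom_ext
    rintro ⟨o, g⟩
    have ht : tr k h ⟨o, g⟩ = ⟨o, g + h o⟩ := rfl
    simp only [AlgHom.comp_apply, four, aeval_X, rename_X, map_sum, map_mul, algHom_C, algebraMap_eq]
    rw [ht]
    refine Finset.sum_congr rfl fun e _ => ?_
    rw [dotProduct_add, AddChar.map_add_eq_mul, C_mul]
    ring
  exact DFunLike.congr_fun this p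

theorem core [CharZero K] (hζ : ζ.IsPrimitive) (f : Idx k → MvPolynomial (Idx k) K)
    (hf : ∀ (σ : Equiv.Perm (Idx k)) i, rename σ (f i) = f (σ i)) (h0 : ∃ i, f i ≠ 0)
    (h1 : ∑ i, f i = 0) (h3 : ∑ i, f i ^ 3 = 0) :
    ∃ a : Fin 3 → K, (∃ o, a o ≠ 0) ∧ ∑ o, 3^(k o) * a o = 0 ∧ ∑ o, 3^(k o) * a o ^ 3 = 0 := by
  have hq0 : ∃ i, four k ζ (f i) ≠ 0 := by
    obtain ⟨i, hi⟩ := h0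
    refine ⟨i, fun h => hi ?_⟩
    rw [← four_inv k ζ hζ (f i), h, map_zero]
  obtain ⟨s, ⟨j, hj⟩, hs1, hs3⟩ := leadCoeffs (fun i => four k ζ (f i)) hq0
    (by rw [← map_sum, h1, map_zero]) (by simp_rw [← map_pow]; rw [← map_sum, h3, map_zero])
  set a : Idx k → K := fun i => coeff s (four k ζ (f i)) with ha
  set c : (∀ o : Fin 3, Fin (k o) → ZMod 3) → K := fun h => s.prod fun i m => ζ (i.2 ⬝ᵥ h i.1) ^ m with hc
  have hca : ∀ h i, a (tr k h i) = c h * a i := by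
    intro h i
    simp only [ha, hc]
    rw [← hf, four_tr, coeff_diag]
  have hcadd : ∀ h h', c (h + h') = c h * c h' := by
    intro h h'
    simp only [hc]
    rw [← Finsupp.prod_mul]
    refine Finsupp.prod_congr fun i _ => ?_
    rw [Pi.add_apply, dotProduct_add, AddChar.map_add_eq_mul, mul_pow]
  have hc0 : c 0 = 1 := by simp [hc]
  have hc3 : ∀ h, c h ^ 3 = 1 := by
    intro h
    have : h + h + h = 0 := by
      funext o t
      simp only [Pi.add_apply, Pi.zero_apply]
      generalize h o t = x
      revert x; decide
    rw [← hc0, ← this, hcadd, hcadd]; ring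
  have htr : ∀ o g, tr k (Pi.single o g) ⟨o, 0⟩ = ⟨o, g⟩ := by
    intro o g; simp [tr]
  have hcard : ∀ o, (Fintype.card (Fin (k o) → ZMod 3) : K) = 3^(k o) := by
    intro o; simp [ZMod.card]
  by_cases hall : ∀ o g, c (Pi.single o g) = 1
  · have hconst : ∀ o g, a ⟨o, g⟩ = a ⟨o, 0⟩ := by
      intro o g
      rw [← htr, hca, hall, one_mul]
    refine ⟨fun o => a ⟨o, 0⟩, ⟨j.1, ?_⟩, ?_, ?_⟩
    · change a ⟨j.1, 0⟩ ≠ 0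
      rw [← hconst j.1 j.2]; exact hj
    · rw [← hs1, Fintype.sum_sigma]
      refine Finset.sum_congr rfl fun o _ => ?_
      change _ = ∑ g, a ⟨o, g⟩
      simp_rw [hconst o]
      rw [Finset.sum_const, nsmul_eq_mul, Finset.card_univ, hcard]
    · rw [← hs3, Fintype.sum_sigma]
      refine Finset.sum_congr rfl fun o _ => ?_
      change _ = ∑ g, a ⟨o, g⟩ ^ 3
      simp_rw [hconst o]
      rw [Finset.sum_const, nsmul_eq_mul, Finset.card_univ, hcard]
  · exfalso
    push Not at hall
    obtain ⟨o, g₀, hne⟩ := hall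
    have hz : ∀ o', o' ≠ o → ∀ g, a ⟨o', g⟩ = 0 := by
      intro o' ho' g
      have e := hca (Pi.single o g₀) ⟨o', g⟩
      have e' : tr k (Pi.single o g₀) ⟨o', g⟩ = ⟨o', g⟩ := by
        simp [tr, Pi.single_eq_of_ne ho']
      rw [e'] at e
      by_contra h
      apply hne
      apply mul_right_cancel₀ h
      rw [← e, one_mul]
    have hsum : ∑ g, a ⟨o, g⟩ ^ 3 = 0 := by
      have hs3' : ∑ i, a i ^ 3 = 0 := hs3
      rw [Fintype.sum_sigma, Finset.sum_eq_single o] at hs3'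
      · exact hs3'
      · intro o' _ ho'
        exact Finset.sum_eq_zero fun g _ => by rw [hz o' ho']; ring
      · simp
    have hval : ∀ g, a ⟨o, g⟩ ^ 3 = a ⟨o, 0⟩ ^ 3 := by
      intro g
      rw [← htr, hca, mul_pow, hc3, one_mul]
    simp_rw [hval] at hsum
    rw [Finset.sum_const, nsmul_eq_mul, Finset.card_univ, hcard] at hsum
    have h00 : a ⟨o, 0⟩ ^ 3 = 0 := by
      rcases mul_eq_zero.mp hsum with h | h
      · exact absurd h (pow_ne_zero _ (by norm_num))
      · exact h
    obtain ⟨o', g⟩ := j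
    apply hj
    by_cases ho' : o' = o
    · subst ho'
      exact pow_eq_zero_iff (n := 3) (by norm_num) |>.mp ((hval g).trans h00)
    · exact hz o' ho' g
end core
end RedX


namespace RedX
open MvPolynomial GenExtBase
section
variable (F₀ : Type) [Field F₀] (n : ℕ)

lemma permAut_alg (σ : Equiv.Perm (Fin n)) (p : MvPolynomial (Fin n) F₀) :
    permAut F₀ n σ (algebraMap _ (L F₀ n) p) = algebraMap _ (L F₀ n) (rename σ p) := by
  unfold permAut
  rw [IsFractionRing.ringEquivOfRingEquiv_algebraMap]
  rfl

lemma permAut_mul (σ τ : Equiv.Perm (Fin n)) (x : L F₀ n) :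
    permAut F₀ n (σ * τ) x = permAut F₀ n σ (permAut F₀ n τ x) := by
  have : (permAut F₀ n (σ * τ) : L F₀ n →+* L F₀ n) = (permAut F₀ n σ : L F₀ n →+* L F₀ n).comp (permAut F₀ n τ : L F₀ n →+* L F₀ n) := by
    apply IsFractionRing.ringHom_ext (A := MvPolynomial (Fin n) F₀)
    intro p
    simp only [RingHom.comp_apply, RingEquiv.coe_toRingHom, permAut_alg, rename_rename]
    rfl
  exact DFunLike.congr_fun this x

lemma permAut_one (x : L F₀ n) : permAut F₀ n 1 x = x := by
  have : (permAut F₀ n 1 : L F₀ n →+* L F₀ n) = RingHom.id _ := by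
    apply IsFractionRing.ringHom_ext (A := MvPolynomial (Fin n) F₀)
    intro p
    simp only [RingHom.id_apply, RingEquiv.coe_toRingHom, permAut_alg]
    rw [Equiv.Perm.coe_one, rename_id]
    rfl
  exact DFunLike.congr_fun this x

abbrev permAction : MulSemiringAction (Equiv.Perm (Fin n)) (L F₀ n) where
  smul σ x := permAut F₀ n σ x
  one_smul := permAut_one F₀ n
  mul_smul := permAut_mul F₀ n
  smul_zero σ := map_zero (permAut F₀ n σ)
  smul_add σ := map_add (permAut F₀ n σ)
  smul_one σ := map_one (permAut F₀ n σ)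
  smul_mul σ := map_mul (permAut F₀ n σ)

lemma trace_sum [CharZero F₀] (δ : E F₀ n) (h : Algebra.trace (F F₀ n) (E F₀ n) δ = 0) :
    ∑ σ : Equiv.Perm (Fin n), permAut F₀ n σ (δ : L F₀ n) = 0 := by
  let _ := permAction F₀ n
  have hsm : ∀ (σ : Equiv.Perm (Fin n)) (x : L F₀ n), σ • x = permAut F₀ n σ x := fun _ _ => rfl
  have i1 : IsGaloisGroup (Equiv.Perm (Fin n)) (F F₀ n) (L F₀ n) := by
    refine ⟨⟨?_⟩, ⟨?_⟩, ⟨?_⟩⟩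
    · intro σ τ hst
      ext i
      have := hst (algebraMap _ (L F₀ n) (X i : MvPolynomial (Fin n) F₀))
      rw [hsm, hsm, permAut_alg, permAut_alg, rename_X, rename_X] at this
      have h2 := X_injective (IsFractionRing.injective (MvPolynomial (Fin n) F₀) (L F₀ n) this)
      rw [h2]
    · intro σ a x
      rw [Algebra.smul_def, Algebra.smul_def, smul_mul']
      congr 1
      exact a.2 σ (Set.mem_univ _)
    · intro b hb
      exact ⟨⟨b, fun σ _ => hb σ⟩, rfl⟩
  have i2 := IsGaloisGroup.isGalois (Equiv.Perm (Fin n)) (F F₀ n) (L F₀ n)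
  have i3 := IsGaloisGroup.finiteDimensional (Equiv.Perm (Fin n)) (F F₀ n) (L F₀ n)
  have i4 : IsScalarTower (F F₀ n) (E F₀ n) (L F₀ n) := IsScalarTower.of_algebraMap_eq fun _ => rfl
  have i5 : FiniteDimensional (F F₀ n) (E F₀ n) := FiniteDimensional.left (F F₀ n) (E F₀ n) (L F₀ n)
  have i6 : FiniteDimensional (E F₀ n) (L F₀ n) := FiniteDimensional.right (F F₀ n) (E F₀ n) (L F₀ n)
  have h1 : Algebra.trace (F F₀ n) (L F₀ n) (δ : L F₀ n) = 0 := by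
    rw [← Algebra.trace_trace (S := E F₀ n)]
    change Algebra.trace (F F₀ n) (E F₀ n) (Algebra.trace (E F₀ n) (L F₀ n) (algebraMap (E F₀ n) (L F₀ n) δ)) = 0
    rw [Algebra.trace_algebraMap, map_nsmul, h, smul_zero]
  have h2 := trace_eq_sum_automorphisms (K := F F₀ n) (δ : L F₀ n)
  rw [h1, map_zero] at h2
  rw [h2]
  refine Fintype.sum_equiv (IsGaloisGroup.mulEquivAlgEquiv (Equiv.Perm (Fin n)) (F F₀ n) (L F₀ n)).toEquiv _ _ ?_
  intro σ
  rfl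

lemma exists_poly [CharZero F₀] (δ : E F₀ n) (h0 : δ ≠ 0) (h1 : Algebra.trace (F F₀ n) (E F₀ n) δ = 0)
    (h3 : Algebra.trace (F F₀ n) (E F₀ n) (δ ^ 3) = 0) :
    ∃ f : MvPolynomial (Fin n) F₀, f ≠ 0 ∧
      (∀ σ : Equiv.Perm (Fin n), (∀ i : Fin n, (i : ℕ) = 0 → σ i = i) → rename σ f = f) ∧
      ∑ σ : Equiv.Perm (Fin n), rename σ f = 0 ∧ ∑ σ : Equiv.Perm (Fin n), (rename σ f) ^ 3 = 0 := by
  classical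
  obtain ⟨p, q, hq, hpq⟩ := IsFractionRing.div_surjective (MvPolynomial (Fin n) F₀) (δ : L F₀ n)
  have hq0 : q ≠ 0 := nonZeroDivisors.ne_zero hq
  have hinj := IsFractionRing.injective (MvPolynomial (Fin n) F₀) (L F₀ n)
  set Q : MvPolynomial (Fin n) F₀ := ∏ σ : Equiv.Perm (Fin n), rename σ q with hQ
  have hQ0 : Q ≠ 0 := by
    rw [hQ, Finset.prod_ne_zero_iff]
    intro σ _ h
    exact hq0 (rename_injective σ σ.injective (by rw [h, map_zero]))
  have hQs : ∀ τ : Equiv.Perm (Fin n), rename τ Q = Q := by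
    intro τ
    rw [hQ, map_prod]
    refine Fintype.prod_equiv (Equiv.mulLeft τ) _ _ ?_
    intro σ
    rw [rename_rename]; rfl
  set f := p * ∏ σ ∈ Finset.univ.erase (1 : Equiv.Perm (Fin n)), rename σ q with hf
  have hqf : q * f = Q * p := by
    rw [hf, hQ, ← Finset.mul_prod_erase Finset.univ _ (Finset.mem_univ (1 : Equiv.Perm (Fin n)))]
    rw [Equiv.Perm.coe_one, rename_id]
    simp only [AlgHom.id_apply]
    ring
  have hfL : algebraMap _ (L F₀ n) f = algebraMap _ (L F₀ n) Q * (δ : L F₀ n) := by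
    rw [← hpq]
    have : algebraMap _ (L F₀ n) q ≠ 0 := by
      rw [Ne, map_eq_zero_iff _ hinj]; exact hq0
    field_simp
    rw [← map_mul, ← map_mul, ← hqf, mul_comm]
  have hσ : ∀ σ : Equiv.Perm (Fin n), algebraMap _ (L F₀ n) (rename σ f) = algebraMap _ (L F₀ n) Q * permAut F₀ n σ (δ : L F₀ n) := by
    intro σ
    rw [← permAut_alg, hfL, map_mul, permAut_alg, hQs]
  refine ⟨f, ?_, ?_, ?_, ?_⟩
  · intro h
    rw [h, map_zero] at hfL
    rcases mul_eq_zero.mp hfL.symm with h | h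
    · exact hQ0 ((map_eq_zero_iff _ hinj).mp h)
    · exact h0 (Subtype.ext h)
  · intro σ hs
    apply hinj
    rw [hσ, hfL]
    congr 1
    exact δ.2 σ hs
  · apply hinj
    rw [map_sum, map_zero]
    simp_rw [hσ]
    rw [← Finset.mul_sum, trace_sum F₀ n δ h1, mul_zero]
  · apply hinj
    rw [map_sum, map_zero]
    simp_rw [map_pow, hσ, mul_pow]
    rw [← Finset.mul_sum]
    have := trace_sum F₀ n (δ^3) h3
    simp_rw [SubmonoidClass.coe_pow, map_pow] at this
    rw [this, mul_zero]
end

lemma sum_orbit {K I : Type*} [Field K] [CharZero K] [Fintype I] [DecidableEq I] (b : I) (g : I → MvPolynomial I K)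
    (h : ∑ σ : Equiv.Perm I, g (σ b) = 0) : ∑ i, g i = 0 := by
  have h1 : ∀ i, ∑ σ : Equiv.Perm I, g (σ i) = 0 := by
    intro i
    rw [← h]
    refine Fintype.sum_equiv (Equiv.mulRight (Equiv.swap b i)) _ _ ?_
    intro σ
    simp
  have h2 : ∑ σ : Equiv.Perm I, ∑ i, g (σ i) = 0 := by
    rw [Finset.sum_comm]
    exact Finset.sum_eq_zero fun i _ => h1 i
  have h3 : ∀ σ : Equiv.Perm I, ∑ i, g (σ i) = ∑ i, g i := fun σ => Equiv.sum_comp σ g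
  simp_rw [h3] at h2
  rw [Finset.sum_const, smul_eq_zero] at h2
  rcases h2 with h2 | h2
  · exact absurd h2 (by rw [Finset.card_univ]; exact Fintype.card_ne_zero)
  · exact h2

lemma exists_family {F₀ K I : Type} [Field F₀] [Field K] [CharZero K] [Algebra F₀ K] [Fintype I] [DecidableEq I]
    (n : ℕ) (hn : 0 < n) (e : Fin n ≃ I) (f : MvPolynomial (Fin n) F₀) (h0 : f ≠ 0)
    (hs : ∀ σ : Equiv.Perm (Fin n), (∀ i : Fin n, (i : ℕ) = 0 → σ i = i) → rename σ f = f)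
    (h1 : ∑ σ : Equiv.Perm (Fin n), rename σ f = 0) (h3 : ∑ σ : Equiv.Perm (Fin n), (rename σ f) ^ 3 = 0) :
    ∃ g : I → MvPolynomial I K, (∀ (σ : Equiv.Perm I) i, rename σ (g i) = g (σ i)) ∧ (∃ i, g i ≠ 0) ∧
      ∑ i, g i = 0 ∧ ∑ i, g i ^ 3 = 0 := by
  let Φ : MvPolynomial (Fin n) F₀ →+* MvPolynomial I K :=
    (rename e : MvPolynomial (Fin n) K →ₐ[K] MvPolynomial I K).toRingHom.comp (MvPolynomial.map (algebraMap F₀ K))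
  have hΦinj : Function.Injective Φ := by
    apply Function.Injective.comp (rename_injective e e.injective)
    exact map_injective _ (algebraMap F₀ K).injective
  have hΦ : ∀ (σ : Equiv.Perm I) p, rename σ (Φ p) = Φ (rename (e.permCongr.symm σ) p) := by
    intro σ p
    change rename σ (rename e (MvPolynomial.map (algebraMap F₀ K) p)) = rename e (MvPolynomial.map (algebraMap F₀ K) (rename (e.permCongr.symm σ) p))
    rw [map_rename, rename_rename, rename_rename]
    congr 2
    funext i
    simp
  let b : I := e ⟨0, hn⟩
  let g : I → MvPolynomial I K := fun i => rename (Equiv.swap b i) (Φ f)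
  have hst : ∀ σ : Equiv.Perm I, σ b = b → rename σ (Φ f) = Φ f := by
    intro σ hσ
    rw [hΦ, hs]
    intro i hi
    have : i = ⟨0, hn⟩ := Fin.ext hi
    subst this
    simp only [Equiv.permCongr_symm_apply]
    rw [Equiv.symm_apply_eq]; exact hσ
  have hg : ∀ σ : Equiv.Perm I, rename σ (Φ f) = g (σ b) := by
    intro σ
    have e1 : (σ : I → I) = (Equiv.swap b (σ b)) ∘ (Equiv.swap b (σ b) * σ : Equiv.Perm I) := by
      funext i; simp
    change _ = rename (Equiv.swap b (σ b)) (Φ f)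
    conv_lhs => rw [e1, ← rename_rename]
    rw [hst]
    simp
  have hsum : ∀ p : MvPolynomial (Fin n) F₀, ∑ σ : Equiv.Perm I, rename σ (Φ p) = Φ (∑ σ : Equiv.Perm (Fin n), rename σ p) := by
    intro p
    rw [map_sum]
    refine Fintype.sum_equiv e.permCongr.symm _ _ ?_
    intro σ
    exact hΦ σ p
  refine ⟨g, ?_, ⟨b, ?_⟩, ?_, ?_⟩
  · intro σ i
    have : σ i = (σ * Equiv.swap b i) b := by simp
    rw [this, ← hg]
    change rename σ (rename (Equiv.swap b i) (Φ f)) = _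
    rw [rename_rename]; rfl
  · intro h
    have := hg 1
    rw [Equiv.Perm.coe_one, rename_id, AlgHom.id_apply, id, h] at this
    exact h0 (hΦinj (this.trans (map_zero Φ).symm))
  · apply sum_orbit b
    simp_rw [← hg]
    rw [hsum, h1, map_zero]
  · apply sum_orbit b (fun i => g i ^ 3)
    simp_rw [← hg, ← map_pow]
    rw [hsum]
    simp_rw [map_pow]
    rw [h3, map_zero]

theorem reduction {F₀ K : Type} [Field F₀] [CharZero F₀] [Field K] [CharZero K] [Algebra F₀ K] (ω : K)
    (hω : IsPrimitiveRoot ω 3) (k₁ k₂ k₃ n : ℕ) (hn : n = 3^k₁ + 3^k₂ + 3^k₃)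
    (δ : E F₀ n) (h0 : δ ≠ 0) (h1 : Algebra.trace (F F₀ n) (E F₀ n) δ = 0)
    (h3 : Algebra.trace (F F₀ n) (E F₀ n) (δ ^ 3) = 0) :
    ∃ a b c : K, ¬ (a = 0 ∧ b = 0 ∧ c = 0) ∧ 3^k₁*a+3^k₂*b+3^k₃*c = 0 ∧ 3^k₁*a^3+3^k₂*b^3+3^k₃*c^3 = 0 := by
  obtain ⟨f, f0, fs, f1, f3⟩ := exists_poly F₀ n δ h0 h1 h3
  let k : Fin 3 → ℕ := ![k₁, k₂, k₃]
  have hcard : Fintype.card (Fin n) = Fintype.card (Idx k) := by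
    have hc : ∀ m : ℕ, Fintype.card (Fin m → ZMod 3) = 3^m := by
      intro m; simp [ZMod.card]
    rw [Fintype.card_fin, Fintype.card_sigma, Fin.sum_univ_three, hc, hc, hc, hn]
    rfl
  obtain ⟨g, g1, g2, g3, g4⟩ := exists_family (K := K) n (by rw [hn]; positivity) (Fintype.equivOfCardEq hcard) f f0 fs f1 f3
  obtain ⟨a, ⟨o, ho⟩, ha1, ha3⟩ := core k _ (AddChar.zmodChar_primitive_of_primitive_root 3 hω) g g1 g2 g3 g4
  rw [Fin.sum_univ_three] at ha1 ha3
  refine ⟨a 0, a 1, a 2, ?_, ha1, ha3⟩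
  rintro ⟨e0, e1, e2⟩
  apply ho
  fin_cases o
  · exact e0
  · exact e1
  · exact e2
end RedX


namespace RedX
lemma finalBound (F₀ : Type) [Field F₀] [CharZero F₀]
    (hfg : ∃ S : Finset F₀, IntermediateField.adjoin ℚ (S : Set F₀) = ⊤) :
    ∃ N1 : ℕ, ∀ k₁ k₂ k₃ : ℕ, k₁ > k₂ → k₂ > k₃ → ∀ n : ℕ, n = 3 ^ k₁ + 3 ^ k₂ + 3 ^ k₃ →
      (∃ δ : GenExtBase.E F₀ n, δ ≠ 0 ∧
            Algebra.trace (GenExtBase.F F₀ n) (GenExtBase.E F₀ n) δ = 0 ∧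
            Algebra.trace (GenExtBase.F F₀ n) (GenExtBase.E F₀ n) (δ ^ 3) = 0) → k₁ - k₃ ≤ N1 := by
  have i0 : Algebra.EssFiniteType ℚ F₀ := by
    rw [← IntermediateField.fg_top_iff]
    obtain ⟨S, hS⟩ := hfg
    exact ⟨S, hS⟩
  let K := CyclotomicField 3 F₀
  have i1 : IsCyclotomicExtension {3} F₀ K := CyclotomicField.isCyclotomicExtension 3 F₀
  have i2 : FiniteDimensional F₀ K := IsCyclotomicExtension.finiteDimensional {3} F₀ K
  have i3 : CharZero K := charZero_of_injective_algebraMap (algebraMap F₀ K).injective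
  have hω := IsCyclotomicExtension.zeta_spec 3 F₀ K
  have i4 : IsScalarTower ℚ F₀ K := inferInstance
  have i5 : Algebra.EssFiniteType ℚ K := Algebra.EssFiniteType.comp ℚ F₀ K
  obtain ⟨Q0, hQ0⟩ := PadeX.cubicBound
  obtain ⟨N0, hN0⟩ := EisX.ratBound Q0 hQ0
  obtain ⟨N1, hN1⟩ := FldX.fieldBound PadeX.quadBound PellX.pellBound N0 hN0 K
  refine ⟨N1, ?_⟩
  rintro k₁ k₂ k₃ h12 h23 n hn ⟨δ, h0, h1, h3⟩
  obtain ⟨a, b, c, habc, e1, e3⟩ := reduction (K := K) _ hω k₁ k₂ k₃ n hn δ h0 h1 h3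
  obtain ⟨l, rfl⟩ := Nat.exists_eq_add_of_le h23.le
  obtain ⟨m, rfl⟩ := Nat.exists_eq_add_of_le (h23.le.trans h12.le)
  have h3k : (3:K)^k₃ ≠ 0 := pow_ne_zero _ (by norm_num)
  rw [Nat.add_sub_cancel_left]
  refine hN1 m l (by omega) (by omega) a b c habc ?_ ?_
  · apply mul_left_cancel₀ h3k
    rw [mul_zero, ← e1, pow_add, pow_add]; ring
  · apply mul_left_cancel₀ h3k
    rw [mul_zero, ← e3, pow_add, pow_add]; ring
end RedX


/-- **Theorem 2.3 (Theorem `thm:precise 2` of the paper, weak form):** let `F₀` be a finitely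
generated field of characteristic `0`. There is a finite subset `𝒮` of `ℕ × ℕ` depending only
on `F₀` such that for every `n = 3^k₁ + 3^k₂ + 3^k₃` with `k₁ > k₂ > k₃ ≥ 0` and
`(k₁ - k₃, k₂ - k₃) ∉ 𝒮`, the general field extension `Eₙ/Fₙ` of degree `n` over `F₀`
contains no nonzero `δ` with `Tr_{Eₙ/Fₙ}(δ) = Tr_{Eₙ/Fₙ}(δ³) = 0`. -/
theorem no_traceZero_cube_traceZero_in_general_extension_over_base
    (F₀ : Type) [Field F₀] [CharZero F₀]
    (hfg : ∃ S : Finset F₀, IntermediateField.adjoin ℚ (S : Set F₀) = ⊤) :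
    ∃ 𝒮 : Finset (ℕ × ℕ),
      ∀ k₁ k₂ k₃ : ℕ, k₁ > k₂ → k₂ > k₃ → (k₁ - k₃, k₂ - k₃) ∉ 𝒮 →
        ∀ n : ℕ, n = 3 ^ k₁ + 3 ^ k₂ + 3 ^ k₃ →
          ¬ ∃ δ : GenExtBase.E F₀ n, δ ≠ 0 ∧
            Algebra.trace (GenExtBase.F F₀ n) (GenExtBase.E F₀ n) δ = 0 ∧
            Algebra.trace (GenExtBase.F F₀ n) (GenExtBase.E F₀ n) (δ ^ 3) = 0 := by
  obtain ⟨N1, hN1⟩ := RedX.finalBound F₀ hfg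
  refine ⟨Finset.range (N1+1) ×ˢ Finset.range (N1+1), ?_⟩
  intro k₁ k₂ k₃ h12 h23 hS n hn hδ
  have := hN1 k₁ k₂ k₃ h12 h23 n hn hδ
  apply hS
  rw [Finset.mem_product, Finset.mem_range, Finset.mem_range]
  constructor
  · change k₁ - k₃ < N1 + 1
    omega
  · change k₂ - k₃ < N1 + 1
    omega

end
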